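/- arXiv:1011.2281 — 4 statements merged into one kernel-verified Lean document; each statement's English description precedes it below -/
import Mathlib

section
/- Let n ≥ 1 and p ≥ n be natural numbers, and let P_p = MvPolynomial (Fin p × Fin n) ℂ be the polynomial ring in variables x_{j,i} (j ∈ Fin p, i ∈ Fin n), regarded as the coordinate ring of p copies of ℂⁿ. Let G be any subgroup of GL(Fin n, ℂ), acting on P_p by ℂ-algebra automorphisms via x_{j,i} ↦ Σ_{i'} g_{i',i} x_{j,i'} (the same g on every copy), and let GL(Fin p, ℂ) act on P_p by ℂ-algebra automorphisms via x_{j,i} ↦ Σ_{j'} σ_{j',j} x_{j',i} (the polarization action on the copy index, which commutes with the G-action). Then the invariant subalgebra P_p^G is generated as a ℂ-algebra by the set of all elements σ • f, where σ ranges over GL(Fin p, ℂ) and f ranges over G-invariant polynomials in P_p that involve only the variables x_{j,i} with j < n. -/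
/-!
Invariants stay invariant under mixing of the copies because the two actions commute; this gives
one inclusion. For the other one, the linear span `W` of the polarizations `σ • f₀` already
contains every invariant `f`.

The argument uses the Fischer inner product `⟪f, g⟫ = Σ_m m! conj(f_m) g_m` on polynomials. It is
positive definite, and multiplication by a variable is adjoint to differentiation, so by the chain
rule the adjoint of the substitution along a `p × p` matrix `M` is the substitution along `Mᴴ`
(`conjPoly_polSubst` and `apolar_polSubst`).

Let `u` be the component of `f` orthogonal to `W`; the projection is taken inside the
finite-dimensional space of polynomials of degree at most `deg f`, which substitutions preserve.
Then `u` is invariant. If `u ≠ 0`, there is an invertible `M` such that `u' = E M u` is nonzero,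
where `E` sets to zero all copies beyond the first `n` (`exists_polSubst_ne_zero`); this holds
because every `p × n` matrix has the form `A (I_n ; 0)`, and invertible `A` are dense. Now `u'` is
an invariant involving only the first `n` copies, hence `Mᴴ u' ∈ W` and
`⟪u', u'⟫ = ⟪u, Mᴴ E u'⟫ = ⟪u, Mᴴ u'⟫ = 0`, a contradiction.
-/

open MvPolynomial

/-- The action of `g ∈ GL(Fin n, ℂ)` on the polynomial ring in variables
`x_{j,i}` (j ∈ Fin p, i ∈ Fin n), acting simultaneously on each of the `p`
copies of `ℂⁿ` via `x_{j,i} ↦ Σ_{i'} g_{i',i} x_{j,i'}`. -/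
noncomputable def actRep (n p : ℕ) (g : Matrix.GeneralLinearGroup (Fin n) ℂ) :
    MvPolynomial (Fin p × Fin n) ℂ →ₐ[ℂ] MvPolynomial (Fin p × Fin n) ℂ :=
  aeval fun ji : Fin p × Fin n =>
    ∑ i' : Fin n, MvPolynomial.C (g.val i' ji.2) * X (ji.1, i')

/-- The polarization action of `σ ∈ GL(Fin p, ℂ)`, mixing the `p` copies:
`x_{j,i} ↦ Σ_{j'} σ_{j',j} x_{j',i}`. -/
noncomputable def actPol (n p : ℕ) (σ : Matrix.GeneralLinearGroup (Fin p) ℂ) :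
    MvPolynomial (Fin p × Fin n) ℂ →ₐ[ℂ] MvPolynomial (Fin p × Fin n) ℂ :=
  aeval fun ji : Fin p × Fin n =>
    ∑ j' : Fin p, MvPolynomial.C (σ.val j' ji.1) * X (j', ji.2)

/-! ### Substitutions mixing the copies -/

/-- The substitution `x_{j,i} ↦ Σ_{j'} M_{j',j} x_{j',i}` for an arbitrary, possibly singular,
matrix `M`; it agrees with `actPol` on invertible matrices. -/
noncomputable def polSubst (n p : ℕ) (M : Matrix (Fin p) (Fin p) ℂ) :
    MvPolynomial (Fin p × Fin n) ℂ →ₐ[ℂ] MvPolynomial (Fin p × Fin n) ℂ :=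
  aeval fun ji : Fin p × Fin n => ∑ j' : Fin p, C (M j' ji.1) * X (j', ji.2)

lemma polSubst_X (n p : ℕ) (M : Matrix (Fin p) (Fin p) ℂ) (j : Fin p) (i : Fin n) :
    polSubst n p M (X (j, i)) = ∑ j' : Fin p, C (M j' j) * X (j', i) := by
  simp [polSubst]

lemma polSubst_polSubst (n p : ℕ) (M N : Matrix (Fin p) (Fin p) ℂ)
    (f : MvPolynomial (Fin p × Fin n) ℂ) :
    polSubst n p M (polSubst n p N f) = polSubst n p (M * N) f := by
  rw [← AlgHom.comp_apply]
  refine DFunLike.congr_fun (algHom_ext fun ⟨j, i⟩ => ?_) f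
  simp only [AlgHom.comp_apply, polSubst_X, map_sum, map_mul, algHom_C, algebraMap_eq,
    Matrix.mul_apply, Finset.mul_sum, Finset.sum_mul]
  rw [Finset.sum_comm]
  exact Finset.sum_congr rfl fun _ _ => Finset.sum_congr rfl fun _ _ => by ring

lemma actRep_polSubst (n p : ℕ) (g : Matrix.GeneralLinearGroup (Fin n) ℂ)
    (M : Matrix (Fin p) (Fin p) ℂ) (f : MvPolynomial (Fin p × Fin n) ℂ) :
    actRep n p g (polSubst n p M f) = polSubst n p M (actRep n p g f) := by
  rw [← AlgHom.comp_apply, ← AlgHom.comp_apply]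
  refine DFunLike.congr_fun (algHom_ext fun ⟨j, i⟩ => ?_) f
  simp only [AlgHom.comp_apply, polSubst, actRep, aeval_X, map_sum, map_mul, algHom_C,
    algebraMap_eq, Finset.mul_sum]
  rw [Finset.sum_comm]
  exact Finset.sum_congr rfl fun _ _ => Finset.sum_congr rfl fun _ _ => by ring

lemma totalDegree_polSubst_le (n p : ℕ) (M : Matrix (Fin p) (Fin p) ℂ)
    (f : MvPolynomial (Fin p × Fin n) ℂ) :
    (polSubst n p M f).totalDegree ≤ f.totalDegree := by
  rw [polSubst, aeval_def, eval₂_eq]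
  refine totalDegree_finsetSum_le fun d hd => ?_
  refine (totalDegree_mul _ _).trans ?_
  rw [algebraMap_eq, totalDegree_C, zero_add]
  refine (totalDegree_finsetProd _ _).trans (le_trans ?_ (le_totalDegree hd))
  refine Finset.sum_le_sum fun a _ => (totalDegree_pow _ _).trans ?_
  refine (Nat.mul_le_mul_left _ (?_ : _ ≤ 1)).trans (mul_one _).le
  refine totalDegree_finsetSum_le fun j _ => (totalDegree_mul _ _).trans ?_
  simp

/-- The chain rule for a linear substitution of the variables. -/
lemma pderiv_polSubst (n p : ℕ) (M : Matrix (Fin p) (Fin p) ℂ) (k : Fin p) (i : Fin n)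
    (f : MvPolynomial (Fin p × Fin n) ℂ) :
    pderiv (k, i) (polSubst n p M f) =
      ∑ j, C (M k j) * polSubst n p M (pderiv (j, i) f) := by
  induction f using MvPolynomial.induction_on with
  | C a => simp [algHom_C]
  | add f g hf hg => simp only [map_add, hf, hg, mul_add, Finset.sum_add_distrib]
  | mul_X f a hf =>
    obtain ⟨l, i'⟩ := a
    have hX : pderiv (k, i) (polSubst n p M (X (l, i'))) =
        ∑ j, C (M k j) * polSubst n p M (pderiv (j, i) (X (l, i'))) := by
      rw [polSubst_X]
      simp only [map_sum, pderiv_C_mul, pderiv_X, Pi.single_apply, Prod.mk.injEq]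
      by_cases h : i' = i <;> simp [h, apply_ite (polSubst n p M)]
    simp only [map_mul, pderiv_mul, map_add, mul_add, Finset.sum_add_distrib, hf, hX,
      Finset.sum_mul, Finset.mul_sum]
    refine congrArg₂ (· + ·) (Finset.sum_congr rfl fun _ _ => ?_)
      (Finset.sum_congr rfl fun _ _ => ?_) <;> ring

/-! ### The Fischer inner product -/

/-- The bilinear apolar pairing `⟨f, g⟩ = f(∂) g |₀`, that is `Σ_m m! f_m g_m`. -/
noncomputable def apolar (s : Type*) [Fintype s] :
    MvPolynomial s ℂ →ₗ[ℂ] MvPolynomial s ℂ →ₗ[ℂ] ℂ :=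
  (basisMonomials s ℂ).constr ℂ fun m => ((∏ a, (m a).factorial : ℕ) : ℂ) • lcoeff ℂ m

lemma apolar_monomial {s : Type*} [Fintype s] (m : s →₀ ℕ) (c : ℂ) (g : MvPolynomial s ℂ) :
    apolar s (monomial m c) g = c * ((∏ a, (m a).factorial : ℕ) : ℂ) * coeff m g := by
  have h : (monomial m c : MvPolynomial s ℂ) = c • basisMonomials s ℂ m := by
    simp [coe_basisMonomials, smul_monomial]
  rw [h, map_smul, apolar, Module.Basis.constr_basis]
  simp [mul_assoc]

lemma apolar_comm {s : Type*} [Fintype s] (f g : MvPolynomial s ℂ) :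
    apolar s f g = apolar s g f := by
  classical
  induction f using MvPolynomial.induction_on' with
  | add f f' h h' => simp [h, h']
  | monomial m c =>
    induction g using MvPolynomial.induction_on' with
    | add g g' h h' => rw [map_add, map_add, h, h', LinearMap.add_apply]
    | monomial m' c' =>
      simp only [apolar_monomial, coeff_monomial]
      by_cases h : m = m'
      · subst h; simp; ring
      · simp [h, Ne.symm h]

/-- Multiplication by a variable is adjoint to differentiation. -/
lemma apolar_mul_X {s : Type*} [Fintype s] (a : s) (f g : MvPolynomial s ℂ) :
    apolar s (f * X a) g = apolar s f (pderiv a g) := by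
  classical
  induction f using MvPolynomial.induction_on' with
  | add f f' h h' => simp [add_mul, h, h']
  | monomial m c =>
    have hfac : ∏ b, ((m + Finsupp.single a 1 : s →₀ ℕ) b).factorial =
        (m a + 1) * ∏ b, (m b).factorial := by
      rw [← Finset.mul_prod_erase _ _ (Finset.mem_univ a),
        ← Finset.mul_prod_erase Finset.univ (fun b => (m b).factorial) (Finset.mem_univ a),
        Finset.prod_congr rfl (g := fun b => (m b).factorial)]
      · simp [Nat.factorial_succ, mul_assoc]
      · intro b hb
        simp [Finsupp.single_eq_of_ne (Finset.ne_of_mem_erase hb)]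
    have hmul : (monomial m c * X a : MvPolynomial s ℂ) =
        monomial (m + Finsupp.single a 1) c := by
      rw [X, monomial_mul, mul_one]
    rw [hmul, apolar_monomial, apolar_monomial, coeff_pderiv, hfac]
    push_cast
    ring

/-- Under the apolar pairing, the adjoint of substitution along `M` is substitution along `Mᵀ`. -/
lemma apolar_polSubst (n p : ℕ) (M : Matrix (Fin p) (Fin p) ℂ)
    (f g : MvPolynomial (Fin p × Fin n) ℂ) :
    apolar _ (polSubst n p M f) g = apolar _ f (polSubst n p M.transpose g) := by
  induction f using MvPolynomial.induction_on generalizing g with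
  | C c =>
    have h : coeff 0 (polSubst n p M.transpose g) = coeff 0 g := by
      change constantCoeff _ = constantCoeff _
      rw [polSubst, constantCoeff_eq]
      induction g using MvPolynomial.induction_on with
      | C a => simp [algHom_C]
      | add f g hf hg => simp only [map_add, coeff_add, hf, hg]
      | mul_X f a hf =>
        simp only [← constantCoeff_eq, map_mul, aeval_X, map_sum, constantCoeff_X,
          mul_zero, Finset.sum_const_zero]
    rw [algHom_C, algebraMap_eq, C_apply, apolar_monomial, apolar_monomial, h]
  | add f f' h h' => simp only [map_add, LinearMap.add_apply, h, h']
  | mul_X f a hf =>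
    obtain ⟨j, i⟩ := a
    rw [apolar_mul_X, pderiv_polSubst, map_mul, polSubst_X, Finset.mul_sum, map_sum, map_sum,
      LinearMap.sum_apply]
    refine Finset.sum_congr rfl fun k _ => ?_
    rw [mul_left_comm, C_mul', C_mul', map_smul, LinearMap.smul_apply, map_smul, apolar_mul_X, hf,
      Matrix.transpose_apply]

/-- Coefficientwise complex conjugation. -/
noncomputable abbrev conjPoly {s : Type*} : MvPolynomial s ℂ →+* MvPolynomial s ℂ :=
  map (starRingEnd ℂ)

lemma conjPoly_polSubst (n p : ℕ) (M : Matrix (Fin p) (Fin p) ℂ)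
    (f : MvPolynomial (Fin p × Fin n) ℂ) :
    conjPoly (polSubst n p M f) = polSubst n p (M.map (starRingEnd ℂ)) (conjPoly f) := by
  induction f using MvPolynomial.induction_on with
  | C a => simp [algHom_C]
  | add f g hf hg => simp only [map_add, hf, hg]
  | mul_X f a hf =>
    obtain ⟨j, i⟩ := a
    rw [map_mul, map_mul, hf, map_mul, map_mul, polSubst_X, map_X, polSubst_X]
    simp

lemma star_apolar {s : Type*} [Fintype s] (f g : MvPolynomial s ℂ) :
    starRingEnd ℂ (apolar s f g) = apolar s (conjPoly f) (conjPoly g) := by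
  induction f using MvPolynomial.induction_on' with
  | add f f' h h' => simp only [map_add, LinearMap.add_apply, h, h']
  | monomial m c => simp [apolar_monomial, coeff_map]

lemma apolar_conjPoly_self {s : Type*} [Fintype s] (f : MvPolynomial s ℂ) :
    apolar s (conjPoly f) f =
      ((∑ m ∈ f.support, (∏ a, (m a).factorial : ℕ) * Complex.normSq (coeff m f) : ℝ) : ℂ) := by
  have h : conjPoly f = ∑ m ∈ f.support, monomial m (starRingEnd ℂ (coeff m f)) := by
    conv_lhs => rw [f.as_sum, map_sum]
    simp only [map_monomial]
  rw [h, map_sum, LinearMap.sum_apply, Complex.ofReal_sum]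
  refine Finset.sum_congr rfl fun m _ => ?_
  rw [apolar_monomial, Complex.ofReal_mul, Complex.normSq_eq_conj_mul_self]
  push_cast
  ring

/-- The Fischer inner product `⟪f, g⟫ = Σ_m m! conj(f_m) g_m`. -/
@[reducible]
noncomputable def fischerCore (s : Type*) [Fintype s] :
    InnerProductSpace.Core ℂ (MvPolynomial s ℂ) where
  inner f g := apolar s (conjPoly f) g
  conj_inner_symm f g := by
    rw [star_apolar, apolar_comm]
    congr 1
    ext m
    simp [coeff_map]
  re_inner_nonneg f := by
    rw [apolar_conjPoly_self]
    simp only [RCLike.re_eq_complex_re, Complex.ofReal_re]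
    exact Finset.sum_nonneg fun m _ => mul_nonneg (Nat.cast_nonneg _) (Complex.normSq_nonneg _)
  add_left f g h := by simp
  smul_left f g r := by
    rw [smul_eq_C_mul, map_mul, map_C, C_mul', map_smul, LinearMap.smul_apply, smul_eq_mul]
  definite f hf := by
    rw [apolar_conjPoly_self, Complex.ofReal_eq_zero, Finset.sum_eq_zero_iff_of_nonneg
      fun m _ => mul_nonneg (Nat.cast_nonneg _) (Complex.normSq_nonneg _)] at hf
    ext m
    by_contra hm
    have := hf m (mem_support_iff.2 hm)
    simp [Finset.prod_eq_zero_iff, Nat.factorial_ne_zero] at this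
    exact hm this

/-- Orthogonal projection onto a finite-dimensional space of polynomials, for the Fischer inner
product. -/
lemma exists_orthogonal_decomposition {s : Type*} [Fintype s] (W : Submodule ℂ (MvPolynomial s ℂ))
    [FiniteDimensional ℂ W] (f : MvPolynomial s ℂ) :
    ∃ w ∈ W, ∀ v ∈ W, apolar s (conjPoly (f - w)) v = 0 := by
  let := fischerCore s
  let : NormedAddCommGroup (MvPolynomial s ℂ) :=
    InnerProductSpace.Core.toNormedAddCommGroup (𝕜 := ℂ)
  let : InnerProductSpace ℂ (MvPolynomial s ℂ) := InnerProductSpace.ofCore _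
  exact ⟨W.starProjection f, W.starProjection_apply_mem f,
    (Submodule.mem_orthogonal' W _).1 (W.sub_starProjection_mem_orthogonal f)⟩

/-! ### Restriction to the first `n` copies -/

/-- The projection of `ℂᵖ` onto its first `n` coordinates. -/
def firstProj (n p : ℕ) : Matrix (Fin p) (Fin p) ℂ :=
  Matrix.diagonal fun j => if (j : ℕ) < n then 1 else 0

lemma firstProj_mul_self (n p : ℕ) : firstProj n p * firstProj n p = firstProj n p := by
  simp [firstProj]

lemma firstProj_conjTranspose (n p : ℕ) : (firstProj n p).conjTranspose = firstProj n p := by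
  rw [firstProj, Matrix.diagonal_conjTranspose]
  congr 1
  ext j
  simp [apply_ite]

/-- Substitution along `firstProj n p` yields a polynomial in the first `n` copies only. -/
lemma exists_polSubst_firstProj (n p : ℕ) (hnp : n ≤ p) (f : MvPolynomial (Fin p × Fin n) ℂ) :
    ∃ f₁ : MvPolynomial (Fin n × Fin n) ℂ, polSubst n p (firstProj n p) f =
      rename (fun ji : Fin n × Fin n => (Fin.castLE hnp ji.1, ji.2)) f₁ := by
  refine ⟨aeval (fun ji : Fin p × Fin n =>
    if h : (ji.1 : ℕ) < n then X (⟨ji.1, h⟩, ji.2) else 0) f, ?_⟩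
  rw [← AlgHom.comp_apply]
  refine DFunLike.congr_fun (algHom_ext fun ⟨j, i⟩ => ?_) f
  rw [polSubst_X, AlgHom.comp_apply, aeval_X]
  simp only [firstProj, Matrix.diagonal_apply]
  by_cases h : (j : ℕ) < n <;> simp [h, ite_mul, apply_ite]

/-- A nonzero polynomial stays nonzero after a suitable invertible mixing of the copies followed by
setting to zero all copies beyond the first `n`. -/
lemma exists_polSubst_ne_zero (n p : ℕ) (hnp : n ≤ p) (u : MvPolynomial (Fin p × Fin n) ℂ)
    (hu : u ≠ 0) :
    ∃ M : Matrix.GeneralLinearGroup (Fin p) ℂ,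
      polSubst n p (firstProj n p * M.val) u ≠ 0 := by
  -- At the point whose first `n` rows form the identity matrix and whose other rows vanish, the
  -- substituted polynomial takes the value `u((M_{i,j})_{j,i})`; this is a nonzero polynomial in
  -- the entries of `M`, so it does not vanish identically on invertible matrices.
  by_contra! h
  let e : Fin p × Fin n → Fin p × Fin p := fun ji => (Fin.castLE hnp ji.2, ji.1)
  have he : Function.Injective e := by
    rintro ⟨j, i⟩ ⟨j', i'⟩ h
    simp only [e, Prod.mk.injEq, Fin.castLE_inj] at h
    simp [h]
  refine hu (rename_injective e he ?_)
  rw [map_zero]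
  refine eq_of_eval_eq_on_gl fun M => ?_
  have h2 := congrArg (aeval fun ji : Fin p × Fin n => if (ji.1 : ℕ) = ji.2 then (1 : ℂ) else 0)
    (h M)
  rw [map_zero, ← AlgHom.comp_apply, polSubst, comp_aeval] at h2
  rw [map_zero, eval_rename, ← h2, ← coe_aeval_eq_eval]
  change aeval _ u = aeval _ u
  congr 2
  ext ⟨j, i⟩
  have key : ∀ k : Fin p, (k : ℕ) = i ↔ k = Fin.castLE hnp i := fun k => by
    simp [Fin.ext_iff]
  simp [e, firstProj, Matrix.diagonal_mul, key]

/-! ### The polarization theorem -/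

/-- Weyl's polarization theorem: for any subgroup `G ⊆ GL(Fin n, ℂ)` and `p ≥ n`,
the invariant ring `P_p^G` is generated as a `ℂ`-algebra by the polarizations
`σ • f₀` of the `G`-invariants `f₀` involving only the first `n` copies. -/
theorem weyl_polarization (n p : ℕ) (hn : 1 ≤ n) (hnp : n ≤ p)
    (G : Subgroup (Matrix.GeneralLinearGroup (Fin n) ℂ))
    (f : MvPolynomial (Fin p × Fin n) ℂ) :
    (∀ g ∈ G, actRep n p g f = f) ↔
      f ∈ Algebra.adjoin ℂ
        { h : MvPolynomial (Fin p × Fin n) ℂ |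
          ∃ (σ : Matrix.GeneralLinearGroup (Fin p) ℂ)
            (f₀ : MvPolynomial (Fin p × Fin n) ℂ),
            (∀ g ∈ G, actRep n p g f₀ = f₀) ∧
            (∃ f₁ : MvPolynomial (Fin n × Fin n) ℂ,
              f₀ = rename (fun ji : Fin n × Fin n => (Fin.castLE hnp ji.1, ji.2)) f₁) ∧
            h = actPol n p σ f₀ } := by
  set S := { h : MvPolynomial (Fin p × Fin n) ℂ |
        ∃ (σ : Matrix.GeneralLinearGroup (Fin p) ℂ)
          (f₀ : MvPolynomial (Fin p × Fin n) ℂ),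
          (∀ g ∈ G, actRep n p g f₀ = f₀) ∧
          (∃ f₁ : MvPolynomial (Fin n × Fin n) ℂ,
            f₀ = rename (fun ji : Fin n × Fin n => (Fin.castLE hnp ji.1, ji.2)) f₁) ∧
          h = actPol n p σ f₀ }
  have hSinv : ∀ h ∈ S, ∀ g ∈ G, actRep n p g h = h := by
    rintro h ⟨σ, f₀, hf₀, -, rfl⟩ g hg
    change actRep n p g (polSubst n p σ.val f₀) = polSubst n p σ.val f₀
    rw [actRep_polSubst, hf₀ g hg]
  constructor
  · intro hf
    have hspan : ∀ w ∈ Submodule.span ℂ S, ∀ g ∈ G, actRep n p g w = w := fun w hw g hg => by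
      have : Submodule.span ℂ S ≤
          LinearMap.eqLocus (actRep n p g).toLinearMap LinearMap.id :=
        Submodule.span_le.2 fun h hh => hSinv h hh g hg
      exact this hw
    -- Cutting down to bounded degree makes the orthogonal projection of `f` available.
    let D := restrictTotalDegree (Fin p × Fin n) ℂ f.totalDegree
    let W : Submodule ℂ (MvPolynomial (Fin p × Fin n) ℂ) := Submodule.span ℂ S ⊓ D
    have : FiniteDimensional ℂ D := inferInstanceAs (Module.Finite ℂ (restrictTotalDegree _ _ _))
    have : FiniteDimensional ℂ W := Submodule.finiteDimensional_inf_right _ _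
    obtain ⟨w, hw, horth⟩ := exists_orthogonal_decomposition W f
    suffices hu : f - w = 0 by
      rw [sub_eq_zero.1 hu]
      exact Algebra.span_le_adjoin ℂ S hw.1
    by_contra hu
    set u := f - w with hu_def
    have huinv : ∀ g ∈ G, actRep n p g u = u := fun g hg => by
      rw [hu_def, map_sub, hf g hg, hspan w hw.1 g hg]
    have huD : u ∈ D :=
      D.sub_mem ((mem_restrictTotalDegree _ _ _).2 le_rfl) hw.2
    obtain ⟨M, hM⟩ := exists_polSubst_ne_zero n p hnp u hu
    set u' := polSubst n p (firstProj n p * M.val) u with hu'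
    have hEu' : polSubst n p (firstProj n p) u' = u' := by
      rw [hu', polSubst_polSubst, ← mul_assoc, firstProj_mul_self]
    have hDstable : ∀ (N : Matrix (Fin p) (Fin p) ℂ), ∀ h ∈ D, polSubst n p N h ∈ D :=
      fun N h hh => (mem_restrictTotalDegree _ _ _).2
        ((totalDegree_polSubst_le n p N h).trans ((mem_restrictTotalDegree _ _ _).1 hh))
    have hmem : polSubst n p M.val.conjTranspose u' ∈ W := by
      refine ⟨Submodule.subset_span ?_, hDstable _ _ (hDstable _ _ huD)⟩
      obtain ⟨f₁, hf₁⟩ := exists_polSubst_firstProj n p hnp u'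
      refine ⟨star M, u', fun g hg => ?_, ⟨f₁, hEu' ▸ hf₁⟩, rfl⟩
      rw [hu', actRep_polSubst, huinv g hg]
    -- `⟪u', u'⟫ = ⟪E M u, u'⟫ = ⟪u, Mᴴ E u'⟫ = ⟪u, Mᴴ u'⟫ = 0`, where `E = firstProj n p`.
    refine hM ((fischerCore _).definite u' ?_)
    change apolar _ (conjPoly u') u' = 0
    have hadj : ((firstProj n p * M.val).map (starRingEnd ℂ)).transpose =
        M.val.conjTranspose * firstProj n p := by
      rw [← firstProj_conjTranspose, ← Matrix.conjTranspose_mul, firstProj_conjTranspose]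
      rfl
    conv_lhs => rw [hu', conjPoly_polSubst, apolar_polSubst, hadj, ← hu']
    rw [← polSubst_polSubst, hEu']
    exact horth _ hmem
  · intro hf g hg
    have hle : Algebra.adjoin ℂ S ≤ AlgHom.equalizer (actRep n p g) (AlgHom.id ℂ _) :=
      Algebra.adjoin_le fun h hh => hSinv h hh g hg
    exact hle hf
end

section
/- Let n ≥ 1 and let P = MvPolynomial (Fin n × ℕ) ℂ be the polynomial ring in variables x_{i,a} (i ∈ Fin n, a ∈ ℕ), regarded as the coordinate ring of countably many copies of the standard representation ℂⁿ. Let the complex orthogonal group O(n, ℂ) = {g ∈ Matrix (Fin n) (Fin n) ℂ : gᵀ * g = 1} act on P by ℂ-algebra automorphisms via x_{i,a} ↦ Σ_{i'} g_{i',i} x_{i',a} (the same g on every copy). For a, b ∈ ℕ define q_{a,b} = Σ_{i ∈ Fin n} x_{i,a} · x_{i,b} ∈ P. Then the invariant subalgebra P^{O(n,ℂ)} equals the ℂ-subalgebra generated by {q_{a,b} : a ≤ b}. -/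
/-!
The quadratics are clearly invariant. For the converse, average over Gaussian matrices. Let `M` be
an `n × n` real matrix with independent standard normal entries, and put `avg f = E[M · f]`, the
expected value of the polynomial obtained by letting `M` act on `f`. There are two facts.

* `avg f` lies in the algebra generated by the quadratics for every `f` (`avg_mem`): integration by
  parts gives Wick's recursion `avg (x_{i,a} f) = ∑_b q_{a,b} avg (∂f/∂x_{i,b})` (`avg_X_mul`).
* `avg` is injective on invariants (`avg_eq_zero`). For the Fischer inner product
  `⟨x^α, x^β⟩ = α! δ_{αβ}` the adjoint of the action of `M` is the action of `Mᵀ`. An invertible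
  `M` has a polar decomposition `M = R² g` with `R` symmetric and `g` orthogonal, so for `f`
  invariant `⟨M · f, f⟩ = ⟨R · f, R · f⟩ ≥ 0`. By density this holds for every `M`. As `⟨f, f⟩ > 0`
  for `f ≠ 0`, integrating the continuous function `M ↦ ⟨M · f, f⟩` yields `⟨avg f, f⟩ > 0`.

When there are finitely many copies of `ℂⁿ`, the invariants of degree at most `d` form a
finite-dimensional space, which `avg` maps injectively to itself, hence onto itself. So every
invariant is an average, and therefore a polynomial in the quadratics. A polynomial in infinitely
many copies involves only finitely many of them.
-/

open MvPolynomial Matrix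

/-- The action of an orthogonal matrix `g` on the polynomial ring in variables
`x_{i,a}` (i ∈ Fin n, a ∈ ℕ), acting simultaneously on each copy of `ℂⁿ` via
`x_{i,a} ↦ Σ_{i'} g_{i',i} x_{i',a}`. -/
noncomputable def actO (n : ℕ) (g : Matrix (Fin n) (Fin n) ℂ) :
    MvPolynomial (Fin n × ℕ) ℂ →ₐ[ℂ] MvPolynomial (Fin n × ℕ) ℂ :=
  aeval fun v : Fin n × ℕ =>
    ∑ i' : Fin n, MvPolynomial.C (g i' v.1) * X (i', v.2)

/-- The quadratic invariants `q_{a,b} = Σ_{i} x_{i,a} x_{i,b}`. -/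
noncomputable def qO (n : ℕ) (a b : ℕ) : MvPolynomial (Fin n × ℕ) ℂ :=
  ∑ i : Fin n, X (i, a) * X (i, b)

namespace FFT

open MeasureTheory ProbabilityTheory

noncomputable section

/-! ### Gaussian expectation of polynomials -/

/-- The `k`-th moment of the standard normal distribution. -/
def gaussMoment (k : ℕ) : ℝ := ∫ x, x ^ k ∂(gaussianReal 0 1)

lemma integrable_pow_gaussianReal (k : ℕ) :
    Integrable (fun x : ℝ => x ^ k) (gaussianReal 0 1) := by
  have h : MemLp (id : ℝ → ℝ) k (gaussianReal 0 1) := by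
    exact_mod_cast memLp_id_gaussianReal (k : NNReal)
  have h2 := h.integrable_norm_pow'
  rw [← integrable_norm_iff (by fun_prop)]
  simpa [norm_pow] using h2

lemma integrable_pow_mul_gaussianPDFReal (k : ℕ) :
    Integrable (fun x : ℝ => x ^ k * gaussianPDFReal 0 1 x) := by
  have h := integrable_pow_gaussianReal k
  rw [gaussianReal_of_var_ne_zero _ one_ne_zero,
    integrable_withDensity_iff_integrable_smul' (measurable_gaussianPDF 0 1)
      (ae_of_all _ fun _ => gaussianPDF_lt_top)] at h
  simpa [toReal_gaussianPDF, mul_comm] using h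

lemma hasDerivAt_gaussianPDFReal (x : ℝ) :
    HasDerivAt (gaussianPDFReal 0 1) (-x * gaussianPDFReal 0 1 x) x := by
  have h : HasDerivAt (fun y : ℝ => -(y - 0) ^ 2 / (2 * ((1 : NNReal) : ℝ))) (-x) x := by
    have := ((((hasDerivAt_id x).sub_const 0).pow 2).neg).div_const (2 * ((1 : NNReal) : ℝ))
    refine this.congr_deriv ?_
    simp [neg_div]
  have h2 := (h.exp).const_mul ((√(2 * Real.pi * ((1 : NNReal) : ℝ)))⁻¹)
  rw [gaussianPDFReal_def]
  refine h2.congr_deriv ?_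
  ring

/-- Integration by parts. At `k = 0` the truncated `k - 1` is harmless, the factor `k` being `0`. -/
lemma gaussMoment_succ (k : ℕ) : gaussMoment (k + 1) = k * gaussMoment (k - 1) := by
  have key := integral_mul_deriv_eq_deriv_mul_of_integrable
    (u := fun x : ℝ => x ^ k) (u' := fun x : ℝ => k * x ^ (k - 1))
    (v := gaussianPDFReal 0 1) (v' := fun x => -x * gaussianPDFReal 0 1 x)
    (fun x _ => hasDerivAt_pow k x) (fun x _ => hasDerivAt_gaussianPDFReal x)
    (by
      convert (integrable_pow_mul_gaussianPDFReal (k + 1)).neg using 1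
      ext x; simp [pow_succ]; ring)
    (by
      convert (integrable_pow_mul_gaussianPDFReal (k - 1)).const_mul (k : ℝ) using 1
      ext x; simp [mul_assoc])
    (integrable_pow_mul_gaussianPDFReal k)
  have e (j : ℕ) : gaussMoment j = ∫ x : ℝ, x ^ j * gaussianPDFReal 0 1 x := by
    rw [gaussMoment, integral_gaussianReal_eq_integral_smul one_ne_zero]
    simp [mul_comm]
  rw [e, e, ← integral_const_mul]
  have h1 : ∀ x : ℝ, x ^ (k + 1) * gaussianPDFReal 0 1 x
      = -(x ^ k * (-x * gaussianPDFReal 0 1 x)) := fun x => by ring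
  simp_rw [h1, integral_neg, key, neg_neg, mul_assoc]

lemma gaussMoment_zero : gaussMoment 0 = 1 := by simp [gaussMoment]

/-- Expectation over independent standard normal variables indexed by `σ`, as an `R`-linear
functional on polynomials in these variables with coefficients in a `ℂ`-algebra `R`. -/
def gaussL (σ R : Type*) [Fintype σ] [CommRing R] [Algebra ℂ R] : MvPolynomial σ R →ₗ[R] R :=
  (basisMonomials σ R).constr R fun α => algebraMap ℂ R (∏ i, (gaussMoment (α i) : ℂ))

section GaussL

variable {σ R : Type*} [Fintype σ] [CommRing R] [Algebra ℂ R]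

lemma gaussL_monomial (α : σ →₀ ℕ) (r : R) :
    gaussL σ R (monomial α r) = r * algebraMap ℂ R (∏ i, (gaussMoment (α i) : ℂ)) := by
  have h : monomial α r = r • (basisMonomials σ R α) := by simp [smul_monomial]
  rw [h, map_smul, gaussL, Module.Basis.constr_basis, smul_eq_mul]

lemma gaussL_one : gaussL σ R 1 = 1 := by
  have := gaussL_monomial (σ := σ) (R := R) 0 1
  simpa [gaussMoment_zero] using this

/-- Stein's identity: multiplication by a Gaussian variable is adjoint to differentiation. -/
lemma gaussL_X_mul (i : σ) (p : MvPolynomial σ R) :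
    gaussL σ R (X i * p) = gaussL σ R (pderiv i p) := by
  classical
  induction p using MvPolynomial.induction_on' with
  | add p q hp hq => simp [mul_add, hp, hq]
  | monomial α r =>
    rw [pderiv_monomial, X, monomial_mul, one_mul, gaussL_monomial, gaussL_monomial, mul_assoc]
    congr 1
    rw [← map_natCast (algebraMap ℂ R), ← map_mul]
    congr 1
    rw [← Finset.mul_prod_erase _ _ (Finset.mem_univ i),
      ← Finset.mul_prod_erase (a := i) _ _ (Finset.mem_univ i), ← mul_assoc]
    congr 1
    · simp [add_comm 1, gaussMoment_succ]
    · refine Finset.prod_congr rfl fun j hj => ?_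
      have : i ≠ j := (Finset.ne_of_mem_erase hj).symm
      simp [this]

end GaussL

/-- The standard Gaussian measure on `σ → ℝ`. -/
def gauss (σ : Type*) [Fintype σ] : Measure (σ → ℝ) := Measure.pi fun _ => gaussianReal 0 1

instance (σ : Type*) [Fintype σ] : (gauss σ).IsOpenPosMeasure := by
  have : (gaussianReal 0 1).IsOpenPosMeasure :=
    (gaussianReal_absolutelyContinuous' 0 one_ne_zero).isOpenPosMeasure
  unfold gauss
  infer_instance

/-- The algebraic expectation `gaussL` is computed by integration against the Gaussian measure,
tested against an arbitrary linear functional `Λ` on the coefficient ring. -/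
lemma gaussL_integral {σ τ : Type*} [Fintype σ] (Λ : MvPolynomial τ ℂ →ₗ[ℂ] ℂ)
    (p : MvPolynomial σ (MvPolynomial τ ℂ)) :
    Continuous (fun M : σ → ℝ => Λ (eval (fun s => C (M s : ℂ)) p)) ∧
    Integrable (fun M : σ → ℝ => Λ (eval (fun s => C (M s : ℂ)) p)) (gauss σ) ∧
    ∫ M, Λ (eval (fun s => C (M s : ℂ)) p) ∂(gauss σ) = Λ (gaussL σ _ p) := by
  induction p using MvPolynomial.induction_on' with
  | add p q hp hq =>
    simp only [map_add]
    exact ⟨hp.1.add hq.1, hp.2.1.add hq.2.1, by rw [integral_add hp.2.1 hq.2.1, hp.2.2, hq.2.2]⟩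
  | monomial α r =>
    have e (M : σ → ℝ) : Λ (eval (fun s => C (M s : ℂ)) (monomial α r))
        = Λ r * ∏ s, ((M s : ℂ)) ^ α s := by
      rw [eval_monomial, Finsupp.prod_fintype _ _ (by simp)]
      simp_rw [← map_pow, ← map_prod]
      rw [mul_comm, C_mul', map_smul, smul_eq_mul, mul_comm]
    simp_rw [e]
    have hi : ∀ s : σ, Integrable (fun x : ℝ => (x : ℂ) ^ α s) (gaussianReal 0 1) := fun s => by
      simpa using (integrable_pow_gaussianReal (α s)).ofReal (𝕜 := ℂ)
    refine ⟨by fun_prop, (Integrable.fintype_prod hi).const_mul _, ?_⟩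
    rw [integral_const_mul, gauss, integral_fintype_prod_eq_prod (fun s (x : ℝ) => (x : ℂ) ^ α s),
      gaussL_monomial, mul_comm r, algebraMap_eq, C_mul', map_smul, smul_eq_mul, mul_comm]
    congr 1
    refine Finset.prod_congr rfl fun s _ => ?_
    rw [gaussMoment, ← integral_complex_ofReal]
    simp

/-! ### The Fischer form -/

section Fischer

variable {σ : Type*}

/-- The bilinear Fischer form `⟨x^α, x^β⟩ = α! δ_{αβ}` on polynomials. The Hermitian inner product
of `f` and `g` is `fischer σ f (conjP g)`. -/
def fischer (σ : Type*) : MvPolynomial σ ℂ →ₗ[ℂ] MvPolynomial σ ℂ →ₗ[ℂ] ℂ :=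
  (basisMonomials σ ℂ).constr ℂ fun α => (α.prod fun _ k => (k.factorial : ℂ)) • lcoeff ℂ α

lemma fischer_monomial (α : σ →₀ ℕ) (c : ℂ) (g : MvPolynomial σ ℂ) :
    fischer σ (monomial α c) g = c * ((α.prod fun _ k => (k.factorial : ℂ)) * coeff α g) := by
  have h : monomial α c = c • (basisMonomials σ ℂ α) := by simp [smul_monomial]
  rw [h, map_smul, fischer, Module.Basis.constr_basis]
  simp [lcoeff]

lemma fischer_one (g : MvPolynomial σ ℂ) : fischer σ 1 g = constantCoeff g := by
  have := fischer_monomial (σ := σ) 0 1 g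
  simpa [constantCoeff_eq] using this

lemma fischer_X_mul (i : σ) (f g : MvPolynomial σ ℂ) :
    fischer σ (X i * f) g = fischer σ f (pderiv i g) := by
  classical
  induction f using MvPolynomial.induction_on' with
  | add p q hp hq => simp [mul_add, hp, hq]
  | monomial α r =>
    rw [X, monomial_mul, one_mul, fischer_monomial, fischer_monomial, coeff_pderiv, add_comm α]
    congr 1
    have h : ((Finsupp.single i 1 + α).prod fun _ k => (k.factorial : ℂ))
        = (α.prod fun _ k => (k.factorial : ℂ)) * (α i + 1) := by
      have hs : (Finsupp.single i 1 + α).support ⊆ insert i α.support := fun j hj => by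
        by_cases h : j = i
        · simp [h]
        · simpa [h, Finsupp.single_apply, Ne.symm h] using hj
      rw [Finsupp.prod_of_support_subset _ hs _ (by simp),
        Finsupp.prod_of_support_subset α (Finset.subset_insert i α.support) _ (by simp),
        ← Finset.mul_prod_erase _ _ (Finset.mem_insert_self i α.support),
        ← Finset.mul_prod_erase (a := i) _ (fun x => ((α x).factorial : ℂ))
          (Finset.mem_insert_self i α.support)]
      have : ∏ x ∈ (insert i α.support).erase i, (((Finsupp.single i 1 + α : σ →₀ ℕ) x).factorial : ℂ)
          = ∏ x ∈ (insert i α.support).erase i, ((α x).factorial : ℂ) := by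
        refine Finset.prod_congr rfl fun j hj => ?_
        have : i ≠ j := (Finset.ne_of_mem_erase hj).symm
        simp [this]
      rw [this]
      simp [add_comm 1 (α i), Nat.factorial_succ]
      ring
    rw [h]
    ring

/-- Complex conjugation of the coefficients. -/
def conjP (f : MvPolynomial σ ℂ) : MvPolynomial σ ℂ := map (starRingEnd ℂ) f

lemma fischer_conj_self (f : MvPolynomial σ ℂ) :
    fischer σ f (conjP f) = ((∑ α ∈ f.support,
      (α.prod fun _ k => (k.factorial : ℝ)) * Complex.normSq (coeff α f) : ℝ) : ℂ) := by
  conv_lhs => rw [f.as_sum]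
  rw [map_sum, LinearMap.sum_apply, Complex.ofReal_sum]
  refine Finset.sum_congr rfl fun α _ => ?_
  rw [fischer_monomial, ← f.as_sum, conjP, coeff_map, Complex.ofReal_mul,
    Complex.normSq_eq_conj_mul_self]
  simp [Finsupp.prod]
  ring

lemma fischer_conj_self_nonneg (f : MvPolynomial σ ℂ) : 0 ≤ (fischer σ f (conjP f)).re := by
  rw [fischer_conj_self, Complex.ofReal_re]
  exact Finset.sum_nonneg fun α _ => mul_nonneg
    (Finset.prod_nonneg fun _ _ => by positivity) (Complex.normSq_nonneg _)

lemma fischer_conj_self_pos {f : MvPolynomial σ ℂ} (hf : f ≠ 0) :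
    0 < (fischer σ f (conjP f)).re := by
  rw [fischer_conj_self, Complex.ofReal_re]
  refine Finset.sum_pos (fun α hα => mul_pos
    (Finset.prod_pos fun _ _ => by positivity) (Complex.normSq_pos.2 (by simpa using hα))) ?_
  simpa using hf

end Fischer

/-! ### The matrix action and its Gaussian average -/

section Act

variable {n : ℕ} {κ : Type*}

/-- `actO` for copies of `ℂⁿ` indexed by an arbitrary type `κ`. -/
def act (κ : Type*) (g : Matrix (Fin n) (Fin n) ℂ) :
    MvPolynomial (Fin n × κ) ℂ →ₐ[ℂ] MvPolynomial (Fin n × κ) ℂ :=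
  aeval fun v : Fin n × κ => ∑ i' : Fin n, C (g i' v.1) * X (i', v.2)

/-- `qO` for copies of `ℂⁿ` indexed by an arbitrary type `κ`. -/
def q (n : ℕ) {κ : Type*} (a b : κ) : MvPolynomial (Fin n × κ) ℂ :=
  ∑ i : Fin n, X (i, a) * X (i, b)

lemma act_X (g : Matrix (Fin n) (Fin n) ℂ) (i : Fin n) (a : κ) :
    act κ g (X (i, a)) = ∑ i', C (g i' i) * X (i', a) := by
  simp [act]

lemma act_mul (g h : Matrix (Fin n) (Fin n) ℂ) (f : MvPolynomial (Fin n × κ) ℂ) :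
    act κ (g * h) f = act κ g (act κ h f) := by
  suffices H : act κ (g * h) = (act κ g).comp (act κ h) by rw [H]; rfl
  refine MvPolynomial.algHom_ext fun ⟨i, a⟩ => ?_
  simp only [AlgHom.comp_apply, act_X, map_sum, map_mul, algHom_C, algebraMap_eq,
    Matrix.mul_apply, Finset.sum_mul, Finset.mul_sum]
  rw [Finset.sum_comm]
  refine Finset.sum_congr rfl fun j _ => Finset.sum_congr rfl fun k _ => ?_
  ring

lemma act_one (f : MvPolynomial (Fin n × κ) ℂ) : act κ 1 f = f := by
  suffices H : act κ (1 : Matrix (Fin n) (Fin n) ℂ) = AlgHom.id ℂ _ by rw [H]; rfl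
  refine MvPolynomial.algHom_ext fun ⟨i, a⟩ => ?_
  simp [act_X, Matrix.one_apply]

lemma act_q {g : Matrix (Fin n) (Fin n) ℂ} (hg : g.transpose * g = 1) (a b : κ) :
    act κ g (q n a b) = q n a b := by
  have hg' : g * g.transpose = 1 := mul_eq_one_comm.1 hg
  simp only [q, map_sum, map_mul, act_X, Finset.sum_mul_sum]
  rw [Finset.sum_comm]
  refine Finset.sum_congr rfl fun j _ => ?_
  rw [Finset.sum_comm]
  have h : ∀ k, ∑ i, (C (g j i) * X (j, a)) * (C (g k i) * X (k, b))
      = C ((1 : Matrix (Fin n) (Fin n) ℂ) j k) *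
        (X (j, a) * X (k, b) : MvPolynomial (Fin n × κ) ℂ) := by
    intro k
    rw [← hg', Matrix.mul_apply, map_sum, Finset.sum_mul]
    refine Finset.sum_congr rfl fun i _ => ?_
    rw [Matrix.transpose_apply, C_mul]
    ring
  simp_rw [h, Matrix.one_apply]
  simp

lemma pderiv_act (g : Matrix (Fin n) (Fin n) ℂ) (i : Fin n) (a : κ)
    (f : MvPolynomial (Fin n × κ) ℂ) :
    pderiv (i, a) (act κ g f) = ∑ j, C (g i j) * act κ g (pderiv (j, a) f) := by
  classical
  induction f using MvPolynomial.induction_on with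
  | C c => simp [act]
  | add p r hp hr => simp [mul_add, hp, hr, Finset.sum_add_distrib]
  | mul_X p v hp =>
    obtain ⟨k, b⟩ := v
    simp only [map_mul, pderiv_mul, hp, act_X, map_add, mul_add, Finset.sum_add_distrib]
    congr 1
    · rw [Finset.sum_mul]
      exact Finset.sum_congr rfl fun j _ => by ring
    · by_cases h : b = a
      · subst h
        simp [pderiv_X, Pi.single_apply, Finset.sum_ite_eq, Prod.ext_iff]
        ring
      · simp [pderiv_X, Prod.ext_iff, h]

/-- With respect to the Fischer form, substitution by `g` is adjoint to substitution by `gᵀ`. On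
products `X v * p` this is `fischer_X_mul` combined with the chain rule `pderiv_act`. -/
lemma fischer_act (g : Matrix (Fin n) (Fin n) ℂ) (f h : MvPolynomial (Fin n × κ) ℂ) :
    fischer _ (act κ g f) h = fischer _ f (act κ g.transpose h) := by
  induction f using MvPolynomial.induction_on generalizing h with
  | C c =>
    have hc : (C c : MvPolynomial (Fin n × κ) ℂ) = c • 1 := by rw [smul_eq_C_mul, mul_one]
    have h0 : constantCoeff (act κ g.transpose h) = constantCoeff h := by
      induction h using MvPolynomial.induction_on with
      | C c => simp [act]
      | add p r hp hr => simp [hp, hr]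
      | mul_X p v hp => obtain ⟨k, b⟩ := v; simp [act_X]
    rw [hc, map_smul, map_one, map_smul, LinearMap.smul_apply, LinearMap.smul_apply,
      fischer_one, fischer_one, h0]
  | add p r hp hr => simp [hp, hr]
  | mul_X p v hp =>
    obtain ⟨k, b⟩ := v
    rw [mul_comm p, fischer_X_mul, pderiv_act, map_mul, act_X, Finset.sum_mul, map_sum, map_sum,
      LinearMap.sum_apply]
    refine Finset.sum_congr rfl fun j _ => ?_
    rw [mul_assoc, C_mul', map_smul, LinearMap.smul_apply, fischer_X_mul, hp, C_mul', map_smul,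
      Matrix.transpose_apply]

lemma conjP_act (g : Matrix (Fin n) (Fin n) ℝ) (f : MvPolynomial (Fin n × κ) ℂ) :
    conjP (act κ (g.map Complex.ofReal) f) = act κ (g.map Complex.ofReal) (conjP f) := by
  unfold conjP
  induction f using MvPolynomial.induction_on with
  | C c => simp [act]
  | add p r hp hr => simp [hp, hr]
  | mul_X p v hp => obtain ⟨k, b⟩ := v; simp [act_X, hp]

/-- The action of the generic `n × n` matrix: its entries are the outer variables, and the
coefficient ring is the original polynomial ring. -/
def genAct (n : ℕ) (κ : Type*) : MvPolynomial (Fin n × κ) ℂ →ₐ[ℂ]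
    MvPolynomial (Fin n × Fin n) (MvPolynomial (Fin n × κ) ℂ) :=
  aeval fun v : Fin n × κ => ∑ i' : Fin n, C (X (i', v.2)) * X (i', v.1)

lemma genAct_X (i : Fin n) (a : κ) :
    genAct n κ (X (i, a)) = ∑ i', C (X (i', a)) * X (i', i) := by
  simp [genAct]

lemma eval_genAct (M : Fin n × Fin n → ℝ) (f : MvPolynomial (Fin n × κ) ℂ) :
    eval (fun s => C (M s : ℂ)) (genAct n κ f)
      = act κ ((Matrix.of fun i j => M (i, j)).map Complex.ofReal) f := by
  induction f using MvPolynomial.induction_on with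
  | C c => simp [act, genAct, MvPolynomial.algebraMap_apply]
  | add p r hp hr => simp [hp, hr]
  | mul_X p v hp =>
    obtain ⟨k, b⟩ := v; simp [act_X, genAct_X, hp, mul_comm]

/-- Chain rule for differentiation with respect to an entry of the generic matrix. -/
lemma pderiv_genAct [Fintype κ] (i j : Fin n) (f : MvPolynomial (Fin n × κ) ℂ) :
    pderiv (i, j) (genAct n κ f) = ∑ b, C (X (i, b)) * genAct n κ (pderiv (j, b) f) := by
  classical
  induction f using MvPolynomial.induction_on with
  | C c => simp [genAct, MvPolynomial.algebraMap_apply]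
  | add p r hp hr => simp [mul_add, hp, hr, Finset.sum_add_distrib]
  | mul_X p v hp =>
    obtain ⟨k, b⟩ := v
    simp only [map_mul, pderiv_mul, hp, genAct_X, map_add, mul_add, Finset.sum_add_distrib]
    congr 1
    · rw [Finset.sum_mul]
      exact Finset.sum_congr rfl fun j _ => by ring
    · by_cases h : k = j
      · subst h
        simp [pderiv_X, Pi.single_apply, Finset.sum_ite_eq, Prod.ext_iff]
        ring
      · simp [pderiv_X, Prod.ext_iff, h]

/-- `avg f = E[M · f]` for a random matrix `M` with independent standard normal entries. -/
def avg (n : ℕ) (κ : Type*) : MvPolynomial (Fin n × κ) ℂ →ₗ[ℂ] MvPolynomial (Fin n × κ) ℂ :=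
  (gaussL (Fin n × Fin n) (MvPolynomial (Fin n × κ) ℂ)).restrictScalars ℂ ∘ₗ
    (genAct n κ).toLinearMap

/-- Wick's recursion: each contraction of two variables produces a quadratic `q n a b`. -/
lemma avg_X_mul [Fintype κ] (i : Fin n) (a : κ) (f : MvPolynomial (Fin n × κ) ℂ) :
    avg n κ (X (i, a) * f) = ∑ b, q n a b * avg n κ (pderiv (i, b) f) := by
  simp only [avg, LinearMap.comp_apply, AlgHom.toLinearMap_apply, map_mul, genAct_X,
    LinearMap.restrictScalars_apply, Finset.sum_mul, map_sum, q]
  rw [Finset.sum_comm]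
  refine Finset.sum_congr rfl fun j _ => ?_
  rw [mul_assoc, C_mul', map_smul, gaussL_X_mul, pderiv_genAct, map_sum, smul_eq_mul,
    Finset.mul_sum]
  refine Finset.sum_congr rfl fun b _ => ?_
  rw [C_mul', map_smul, smul_eq_mul, mul_assoc]

end Act

/-! ### Invariants are averages -/

section Main

variable {n : ℕ} {κ : Type*}

/-- The subalgebra generated by all quadratics `q n a b`. -/
def qAlg (n : ℕ) (κ : Type*) : Subalgebra ℂ (MvPolynomial (Fin n × κ) ℂ) :=
  Algebra.adjoin ℂ (Set.range fun s : κ × κ => q n s.1 s.2)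

lemma q_mem (a b : κ) : q n a b ∈ qAlg n κ :=
  Algebra.subset_adjoin ⟨(a, b), rfl⟩

lemma totalDegree_q_le (a b : κ) : (q n a b).totalDegree ≤ 2 := by
  refine totalDegree_finsetSum_le fun i _ => ?_
  refine (totalDegree_mul _ _).trans ?_
  simp

lemma avg_C (c : ℂ) : avg n κ (C c) = C c := by
  have h : (C c : MvPolynomial (Fin n × κ) ℂ) = c • 1 := by rw [smul_eq_C_mul, mul_one]
  rw [h, map_smul]
  simp [avg, gaussL_one]

/-- By induction along `avg_X_mul`, the average of any monomial, invariant or not, is a polynomial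
in the quadratics of no larger degree. -/
lemma avg_monomial_mem [Fintype κ] (d : ℕ) : ∀ (α : Fin n × κ →₀ ℕ) (c : ℂ), α.degree = d →
    avg n κ (monomial α c) ∈ qAlg n κ ∧ (avg n κ (monomial α c)).totalDegree ≤ d := by
  classical
  induction d using Nat.strong_induction_on with
  | _ d ih =>
  intro α c hα
  by_cases h0 : α = 0
  · subst h0
    rw [← C_apply, avg_C]
    exact ⟨(qAlg n κ).algebraMap_mem c, by simp⟩
  · obtain ⟨⟨i, a⟩, hv⟩ := Finsupp.ne_iff.1 h0
    obtain ⟨β, rfl⟩ : ∃ β, α = Finsupp.single (i, a) 1 + β :=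
      ⟨α - Finsupp.single (i, a) 1, by
        rw [add_tsub_cancel_of_le]
        simpa [Finsupp.single_le_iff, Nat.one_le_iff_ne_zero] using hv⟩
    have hX : monomial (Finsupp.single (i, a) 1 + β) c
        = X (i, a) * (monomial β c : MvPolynomial (Fin n × κ) ℂ) := by
      rw [X, monomial_mul, one_mul]
    have hd : β.degree + 1 = d := by
      rw [← hα, map_add, Finsupp.degree_single, add_comm]
    rw [hX, avg_X_mul]
    have key : ∀ b, avg n κ (pderiv (i, b) (monomial β c)) ∈ qAlg n κ ∧
        (q n a b * avg n κ (pderiv (i, b) (monomial β c))).totalDegree ≤ d := by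
      intro b
      rw [pderiv_monomial]
      by_cases hb : β (i, b) = 0
      · simp [hb]
      · obtain ⟨γ, rfl⟩ : ∃ γ, β = Finsupp.single (i, b) 1 + γ :=
          ⟨β - Finsupp.single (i, b) 1, by
            rw [add_tsub_cancel_of_le]
            simpa [Finsupp.single_le_iff, Nat.one_le_iff_ne_zero] using hb⟩
        have hd' : γ.degree + 2 = d := by
          rw [← hd, map_add, Finsupp.degree_single]; ring
        rw [add_tsub_cancel_left]
        have h2 := fun c' => ih γ.degree (by omega) γ c' rfl
        refine ⟨(h2 _).1, (totalDegree_mul _ _).trans ?_⟩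
        have h2 := (h2 (c * ((Finsupp.single (i, b) 1 + γ : Fin n × κ →₀ ℕ) (i, b) : ℕ))).2
        have h3 := totalDegree_q_le (n := n) a b
        omega
    exact ⟨sum_mem fun b _ => mul_mem (q_mem a b) (key b).1,
      totalDegree_finsetSum_le fun b _ => (key b).2⟩

lemma avg_mem [Fintype κ] (f : MvPolynomial (Fin n × κ) ℂ) : avg n κ f ∈ qAlg n κ := by
  rw [f.as_sum, map_sum]
  exact sum_mem fun α _ => (avg_monomial_mem _ α _ rfl).1

lemma totalDegree_avg_le [Fintype κ] (f : MvPolynomial (Fin n × κ) ℂ) :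
    (avg n κ f).totalDegree ≤ f.totalDegree := by
  conv_lhs => rw [f.as_sum, map_sum]
  refine totalDegree_finsetSum_le fun α hα => (avg_monomial_mem _ α _ rfl).2.trans ?_
  exact le_totalDegree hα

/-- The algebra of invariants of the complex orthogonal group. -/
def inv (n : ℕ) (κ : Type*) : Subalgebra ℂ (MvPolynomial (Fin n × κ) ℂ) where
  carrier := {f | ∀ g : Matrix (Fin n) (Fin n) ℂ, g.transpose * g = 1 → act κ g f = f}
  mul_mem' := fun hf hh g hg => by rw [map_mul, hf g hg, hh g hg]
  add_mem' := fun hf hh g hg => by rw [map_add, hf g hg, hh g hg]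
  algebraMap_mem' := fun c g _ => AlgHom.commutes _ c

lemma qAlg_le_inv : qAlg n κ ≤ inv n κ := by
  refine Algebra.adjoin_le ?_
  rintro _ ⟨⟨a, b⟩, rfl⟩ g hg
  exact act_q hg a b

open scoped MatrixOrder in
/-- Polar decomposition `M = S * g` of an invertible real matrix, with the positive factor written
as the square `S = R * R` of a symmetric matrix. -/
lemma exists_polar {M : Matrix (Fin n) (Fin n) ℝ} (hM : M.det ≠ 0) :
    ∃ R g : Matrix (Fin n) (Fin n) ℝ, R.transpose = R ∧ g.transpose * g = 1 ∧ M = R * R * g := by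
  have hP : (M * M.transpose).PosSemidef := by
    simpa [Matrix.conjTranspose_eq_transpose_of_trivial] using
      Matrix.posSemidef_self_mul_conjTranspose M
  set S := CFC.sqrt (M * M.transpose) with hS
  have hSS : S * S = M * M.transpose := CFC.sqrt_mul_sqrt_self _ hP.nonneg
  have hS0 : 0 ≤ S := CFC.sqrt_nonneg _
  have hRR : CFC.sqrt S * CFC.sqrt S = S := CFC.sqrt_mul_sqrt_self _ hS0
  have hRt : (CFC.sqrt S).transpose = CFC.sqrt S := by
    have := (CFC.sqrt_nonneg S).isSelfAdjoint
    rw [← Matrix.conjTranspose_eq_transpose_of_trivial]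
    exact this
  have hSt : S.transpose = S := by
    rw [← hRR, Matrix.transpose_mul, hRt]
  have hdet : IsUnit S.det := by
    have h := congrArg Matrix.det hSS
    rw [Matrix.det_mul, Matrix.det_mul, Matrix.det_transpose] at h
    refine isUnit_iff_ne_zero.2 fun h0 => ?_
    rw [h0, zero_mul] at h
    exact mul_ne_zero hM hM h.symm
  refine ⟨CFC.sqrt S, S⁻¹ * M, hRt, ?_, ?_⟩
  · refine mul_eq_one_comm.1 ?_
    rw [Matrix.transpose_mul, Matrix.transpose_nonsing_inv, hSt, Matrix.mul_assoc,
      ← Matrix.mul_assoc M, ← hSS, Matrix.mul_assoc S, Matrix.mul_nonsing_inv _ hdet,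
      Matrix.mul_one, Matrix.nonsing_inv_mul _ hdet]
  · rw [hRR, ← Matrix.mul_assoc, Matrix.mul_nonsing_inv _ hdet, Matrix.one_mul]

/-- If `M = R * R * g` with `R` symmetric and `g` orthogonal, then `⟨M · f, f⟩ = ⟨R · f, R · f⟩`
for an invariant `f`. -/
lemma fischer_act_nonneg_of_det_ne_zero {f : MvPolynomial (Fin n × κ) ℂ} (hf : f ∈ inv n κ)
    {M : Matrix (Fin n) (Fin n) ℝ} (hM : M.det ≠ 0) :
    0 ≤ (fischer _ (act κ (M.map Complex.ofReal) f) (conjP f)).re := by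
  obtain ⟨R, g, hR, hg, rfl⟩ := exists_polar hM
  have hmap (A B : Matrix (Fin n) (Fin n) ℝ) :
      (A * B).map Complex.ofReal = A.map Complex.ofReal * B.map Complex.ofReal :=
    Matrix.map_mul (f := Complex.ofRealHom)
  have hg' : (g.map Complex.ofReal).transpose * g.map Complex.ofReal = 1 := by
    rw [← Matrix.transpose_map, ← hmap, hg]
    exact Matrix.map_one _ Complex.ofReal_zero Complex.ofReal_one
  rw [hmap, hmap, act_mul, hf _ hg', act_mul, fischer_act, ← Matrix.transpose_map, hR, ← conjP_act]
  exact fischer_conj_self_nonneg _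

lemma dense_det_ne_zero :
    Dense {M : Fin n × Fin n → ℝ | (Matrix.of fun i j => M (i, j)).det ≠ 0} := by
  intro M
  set A : Matrix (Fin n) (Fin n) ℝ := Matrix.of fun i j => M (i, j)
  -- The perturbation `A - t • 1` is singular only when `t` is an eigenvalue of `A`.
  let γ : ℝ → (Fin n × Fin n → ℝ) := fun t s => M s - t * (1 : Matrix (Fin n) (Fin n) ℝ) s.1 s.2
  have hγ : Filter.Tendsto γ (nhdsWithin 0 {0}ᶜ) (nhds M) := by
    have hc : Continuous γ := by fun_prop
    have := hc.tendsto 0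
    have h0 : γ 0 = M := by ext s; simp [γ]
    rw [h0] at this
    exact this.mono_left nhdsWithin_le_nhds
  refine mem_closure_of_tendsto hγ ?_
  have hfin : {t : ℝ | A.charpoly.IsRoot t}.Finite :=
    Polynomial.finite_setOfPred_isRoot A.charpoly_monic.ne_zero
  have hev : ∀ᶠ t in nhdsWithin (0 : ℝ) {0}ᶜ, ¬ A.charpoly.IsRoot t := by
    have h1 : ({t : ℝ | A.charpoly.IsRoot t} \ {0})ᶜ ∈ nhds (0 : ℝ) :=
      (hfin.subset Set.sdiff_subset).isClosed.isOpen_compl.mem_nhds (by simp)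
    filter_upwards [nhdsWithin_le_nhds h1, self_mem_nhdsWithin] with t ht ht0 hr
    exact ht ⟨hr, ht0⟩
  filter_upwards [hev] with t ht h0
  apply ht
  rw [Polynomial.IsRoot, Matrix.eval_charpoly]
  have : Matrix.scalar (Fin n) t - A = -(Matrix.of fun i j => γ t (i, j)) := by
    ext i j
    simp [γ, A, Matrix.one_apply, Matrix.diagonal_apply]
  rw [this, Matrix.det_neg, h0, mul_zero]

/-- `⟨avg f, h⟩` is the Gaussian integral of the continuous function `M ↦ ⟨M · f, h⟩`. -/
lemma fischer_avg (f h : MvPolynomial (Fin n × κ) ℂ) :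
    Continuous (fun M : Fin n × Fin n → ℝ =>
      fischer _ (act κ ((Matrix.of fun i j => M (i, j)).map Complex.ofReal) f) h) ∧
    Integrable (fun M : Fin n × Fin n → ℝ =>
      fischer _ (act κ ((Matrix.of fun i j => M (i, j)).map Complex.ofReal) f) h)
      (gauss (Fin n × Fin n)) ∧
    ∫ M : Fin n × Fin n → ℝ,
      fischer _ (act κ ((Matrix.of fun i j => M (i, j)).map Complex.ofReal) f) h
      ∂(gauss (Fin n × Fin n)) = fischer _ (avg n κ f) h := by
  have H := gaussL_integral ((fischer (Fin n × κ)).flip h) (genAct n κ f)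
  simp only [eval_genAct, LinearMap.flip_apply] at H
  exact H

lemma re_eq_zero_of_integral_eq_zero {σ : Type*} [Fintype σ] {F : (σ → ℝ) → ℂ}
    (hc : Continuous F) (hi : Integrable F (gauss σ)) (hint : ∫ M, F M ∂(gauss σ) = 0)
    (hnn : ∀ M, 0 ≤ (F M).re) (M : σ → ℝ) : (F M).re = 0 := by
  by_contra h1
  have hpos := integral_pos_of_integrable_nonneg_nonzero (Complex.continuous_re.comp hc)
    hi.re hnn h1
  have hre : ∫ M, (F M).re ∂(gauss σ) = 0 := by
    have := integral_re hi
    rw [hint] at this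
    simpa using this
  exact hpos.ne' hre

/-- `avg` is injective on invariants. -/
lemma avg_eq_zero {f : MvPolynomial (Fin n × κ) ℂ} (hf : f ∈ inv n κ) (h : avg n κ f = 0) :
    f = 0 := by
  by_contra hne
  obtain ⟨hc, hi, hint⟩ := fischer_avg f (conjP f)
  rw [h, map_zero, LinearMap.zero_apply] at hint
  have hnn : ∀ M : Fin n × Fin n → ℝ,
      0 ≤ (fischer _ (act κ ((Matrix.of fun i j => M (i, j)).map Complex.ofReal) f)
        (conjP f)).re := by
    intro M
    have hcl := isClosed_le continuous_const (Complex.continuous_re.comp hc) (f := fun _ => (0 : ℝ))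
    exact hcl.closure_subset_iff.2
      (fun M hM => fischer_act_nonneg_of_det_ne_zero hf hM) (dense_det_ne_zero M)
  have h1 := re_eq_zero_of_integral_eq_zero hc hi hint hnn
    (fun s => (1 : Matrix (Fin n) (Fin n) ℝ) s.1 s.2)
  have e : ((Matrix.of fun i j => (1 : Matrix (Fin n) (Fin n) ℝ) i j).map Complex.ofReal) = 1 :=
    Matrix.map_one _ Complex.ofReal_zero Complex.ofReal_one
  rw [e, act_one] at h1
  exact (fischer_conj_self_pos hne).ne' h1

/-- On the finite-dimensional space of invariants of bounded degree, `avg` is an injective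
endomorphism, so every invariant is an average. -/
lemma inv_le_qAlg [Fintype κ] : inv n κ ≤ qAlg n κ := by
  intro f hf
  let W : Submodule ℂ (MvPolynomial (Fin n × κ) ℂ) :=
    (inv n κ).toSubmodule ⊓ restrictTotalDegree (Fin n × κ) ℂ f.totalDegree
  have hW : ∀ h ∈ W, avg n κ h ∈ W := fun h hh =>
    ⟨qAlg_le_inv (avg_mem h), (mem_restrictTotalDegree _ _ _).2
      ((totalDegree_avg_le h).trans ((mem_restrictTotalDegree _ _ _).1 hh.2))⟩
  have : FiniteDimensional ℂ W := Submodule.finiteDimensional_inf_right _ _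
  have hinj : Function.Injective ((avg n κ).restrict hW) := by
    rw [← LinearMap.ker_eq_bot, LinearMap.ker_eq_bot']
    intro h hh
    exact Subtype.ext (avg_eq_zero h.2.1 (congrArg Subtype.val hh))
  obtain ⟨h, hh⟩ := LinearMap.surjective_of_injective hinj
    ⟨f, hf, (mem_restrictTotalDegree _ _ _).2 le_rfl⟩
  have : avg n κ h = f := congrArg Subtype.val hh
  exact this ▸ avg_mem _

lemma act_rename {ι : Type*} (e : ι → κ) (g : Matrix (Fin n) (Fin n) ℂ)
    (f : MvPolynomial (Fin n × ι) ℂ) :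
    act κ g (rename (Prod.map id e) f) = rename (Prod.map id e) (act ι g f) := by
  induction f using MvPolynomial.induction_on with
  | C c => simp [act]
  | add p r hp hr => simp [hp, hr]
  | mul_X p v hp => obtain ⟨k, b⟩ := v; simp [act_X, hp]

/-- A polynomial involves only finitely many copies of `ℂⁿ`, which reduces an arbitrary `κ` to a
finite one. -/
lemma inv_eq_qAlg : inv n κ = qAlg n κ := by
  classical
  refine le_antisymm (fun f hf => ?_) qAlg_le_inv
  let s : Finset κ := f.vars.image Prod.snd
  let e : Fin n × s → Fin n × κ := Prod.map id Subtype.val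
  have he : Function.Injective e := Function.injective_id.prodMap Subtype.val_injective
  obtain ⟨f', hff⟩ := exists_rename_eq_of_vars_subset_range f e he (by
    rintro ⟨i, a⟩ hv
    exact ⟨(i, ⟨a, Finset.mem_image_of_mem Prod.snd hv⟩), rfl⟩)
  have hf' : f' ∈ inv n s := fun g hg =>
    rename_injective e he (by
      rw [← act_rename]
      exact (congrArg (act κ g) hff).trans ((hf g hg).trans hff.symm))
  have h : rename e f' ∈ (qAlg n s).map (rename e) :=
    Subalgebra.mem_map.2 ⟨f', inv_le_qAlg hf', rfl⟩
  rw [hff, qAlg, AlgHom.map_adjoin] at h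
  refine Algebra.adjoin_mono ?_ h
  rintro _ ⟨_, ⟨⟨a, b⟩, rfl⟩, rfl⟩
  exact ⟨(a, b), by simp [q, e]⟩

end Main

end

end FFT

/-- First fundamental theorem of invariant theory for `O(n, ℂ)` (Weyl): the
invariant subalgebra of the coordinate ring of countably many copies of `ℂⁿ`
is generated by the quadratics `q_{a,b}` for `a ≤ b`. -/
theorem fft_orthogonal (n : ℕ) (hn : 1 ≤ n) (f : MvPolynomial (Fin n × ℕ) ℂ) :
    (∀ g : Matrix (Fin n) (Fin n) ℂ, g.transpose * g = 1 → actO n g f = f) ↔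
      f ∈ Algebra.adjoin ℂ
        { p : MvPolynomial (Fin n × ℕ) ℂ | ∃ a b : ℕ, a ≤ b ∧ p = qO n a b } := by
  have hset : { p : MvPolynomial (Fin n × ℕ) ℂ | ∃ a b : ℕ, a ≤ b ∧ p = qO n a b }
      = Set.range fun s : ℕ × ℕ => FFT.q n s.1 s.2 := by
    ext p
    constructor
    · rintro ⟨a, b, -, rfl⟩
      exact ⟨(a, b), rfl⟩
    · rintro ⟨⟨a, b⟩, rfl⟩
      rcases le_total a b with h | h
      · exact ⟨a, b, h, rfl⟩
      · exact ⟨b, a, h, Finset.sum_congr rfl fun i _ => mul_comm _ _⟩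
  rw [hset]
  exact SetLike.ext_iff.1 (FFT.inv_eq_qAlg (n := n) (κ := ℕ)) f
end

section
/- Let n ≥ 1, let P = MvPolynomial (Fin n × ℕ) ℂ with variables x_{i,a}, and set q_{a,b} = Σ_{i ∈ Fin n} x_{i,a} · x_{i,b} ∈ P. Let A = MvPolynomial {p : ℕ × ℕ // p.1 ≤ p.2} ℂ, with variables Q_{a,b} for a ≤ b, and for arbitrary a, b ∈ ℕ write Q̂_{a,b} = Q_{min(a,b), max(a,b)}. Let φ : A → P be the unique ℂ-algebra homomorphism with φ(Q_{a,b}) = q_{a,b}. For strictly increasing tuples I = (i_0 < i_1 < ⋯ < i_n) and J = (j_0 < j_1 < ⋯ < j_n) of natural numbers, let d_{I,J} ∈ A be the determinant of the (n+1) × (n+1) matrix whose (a,b) entry is Q̂_{i_a, j_b}. Then the kernel of φ equals the ideal of A generated by the elements d_{I,J}, as I and J range over all strictly increasing (n+1)-tuples of natural numbers. -/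
/-!
The proof is a Gröbner-type argument for the weight `Q_{a,b} ↦ a * b`.

*Minors vanish.* Under `φ` the matrix `(Q̂_{i_a, j_b})` becomes a product of an `(n+1) × n` and an
`n × (n+1)` matrix, so its determinant is zero.

*Reduction.* Order the index pairs by `p ≪ q` when both coordinates strictly increase. By the
rearrangement inequality, the diagonal term of `d_{I,J}` has strictly larger weight than every
other term. Hence a monomial whose support contains a `≪`-chain of length `n + 1` is, modulo the
ideal of minors, a combination of monomials of smaller weight. By induction on the weight, every
polynomial is congruent to a combination of normal monomials, those supporting no such chain
(`monomial_mem_sup`).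

*Independence.* The support of a normal monomial `m` splits into `n` classes, its colours, that are
`≪`-antichains (`exists_coloring`). An antichain of pairs is nested,
`a₁ ≤ a₂ ≤ ⋯ ≤ b₂ ≤ b₁`. Let `e` be the monomial of `P` obtained by replacing each factor `Q_{a,b}`
of colour `i` by `x_{i,a} x_{i,b}`. A monomial `m'` contributes to the coefficient of `e` in the
image only if it arises from `m` by pairing the endpoints within each colour anew. The nested
pairing is the unique one of smallest weight (`eq_or_weight_lt`), so `m' = m` or `m'` has larger
weight. Taking `m` of maximal weight in a normal polynomial `g` shows that `e` occurs in `φ(g)`.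
-/

open MvPolynomial

/-- The polynomial ring in commuting indeterminates `Q_{a,b}` for `a ≤ b`. -/
abbrev QRing : Type := MvPolynomial {p : ℕ × ℕ // p.1 ≤ p.2} ℂ

/-- The symmetric extension `Q̂_{a,b} = Q_{min(a,b), max(a,b)}`. -/
noncomputable def Qhat (a b : ℕ) : QRing :=
  X ⟨(min a b, max a b), min_le_max⟩

/-- The `ℂ`-algebra homomorphism `φ : A → P` sending `Q_{a,b} ↦ q_{a,b}`. -/
noncomputable def phiO (n : ℕ) : QRing →ₐ[ℂ] MvPolynomial (Fin n × ℕ) ℂ :=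
  aeval fun s : {p : ℕ × ℕ // p.1 ≤ p.2} => qO n s.1.1 s.1.2

/-- Index pairs `a ≤ b`, labelling the variables `Q_{a,b}`. -/
abbrev SPair : Type := {p : ℕ × ℕ // p.1 ≤ p.2}

/-- The pair with endpoints `a` and `b`, in increasing order. -/
def mkPair (a b : ℕ) : SPair := ⟨(min a b, max a b), min_le_max⟩

/-- `p ≪ q`: both coordinates strictly increase. -/
def SLt (p q : SPair) : Prop := p.1.1 < q.1.1 ∧ p.1.2 < q.1.2

/-- The weight `∑ a * b` of a monomial `∏ Q_{a,b}`. -/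
noncomputable def wt (m : SPair →₀ ℕ) : ℕ := Finsupp.weight (fun p : SPair => p.1.1 * p.1.2) m

/-- The set `S` contains no `≪`-chain of length `n + 1`. -/
def NoChain (n : ℕ) (S : Finset SPair) : Prop :=
  ∀ l : List SPair, l.Pairwise SLt → (∀ p ∈ l, p ∈ S) → l.length ≠ n + 1

/-! ### Minors lie in the kernel -/

lemma phiO_Qhat (n a b : ℕ) : phiO n (Qhat a b) = ∑ i : Fin n, X (i, a) * X (i, b) := by
  simp only [phiO, Qhat, aeval_X, qO]
  rcases le_total a b with h | h
  · simp [h]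
  · simp only [min_eq_right h, max_eq_left h]
    exact Finset.sum_congr rfl fun i _ => mul_comm _ _

lemma phiO_det (n : ℕ) (I J : Fin (n + 1) → ℕ) :
    phiO n (Matrix.det (Matrix.of fun a b : Fin (n + 1) => Qhat (I a) (J b))) = 0 := by
  -- Pad the two rectangular factors with a zero column and a zero row.
  let B : Matrix (Fin (n + 1)) (Fin (n + 1)) (MvPolynomial (Fin n × ℕ) ℂ) :=
    Matrix.of fun a k => Fin.lastCases (motive := fun _ => MvPolynomial (Fin n × ℕ) ℂ) 0
      (fun i => X (i, I a)) k
  let C : Matrix (Fin (n + 1)) (Fin (n + 1)) (MvPolynomial (Fin n × ℕ) ℂ) :=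
    Matrix.of fun k b => Fin.lastCases (motive := fun _ => MvPolynomial (Fin n × ℕ) ℂ) 0
      (fun i => X (i, J b)) k
  have hB : B.det = 0 :=
    Matrix.det_eq_zero_of_column_eq_zero (Fin.last n) fun a => by simp [B]
  have h : (phiO n).mapMatrix (Matrix.of fun a b : Fin (n + 1) => Qhat (I a) (J b)) = B * C := by
    ext1 a b
    simp [Matrix.mul_apply, Fin.sum_univ_castSucc, B, C, phiO_Qhat]
  rw [AlgHom.map_det, h, Matrix.det_mul, hB, zero_mul]

/-! ### Reduction to normal monomials -/

/-- The rearrangement inequality in the form needed for minors. -/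
lemma sum_perm_lt {k : ℕ} {I J : Fin k → ℕ} (hI : StrictMono I) (hJ : StrictMono J)
    {σ : Equiv.Perm (Fin k)} (hσ : σ ≠ 1) :
    ∑ a, I (σ a) * J a < ∑ a, I a * J a := by
  have hmono : Monovary I J := fun a b h => hI.monotone (hJ.lt_iff_lt.1 h).le
  rw [hmono.sum_comp_perm_mul_lt_sum_mul_iff]
  intro h
  apply hσ
  have hm : StrictMono σ := fun a b hab =>
    lt_of_le_of_ne (hI.le_iff_le.1 (h (hJ hab))) (σ.injective.ne hab.ne)
  ext a
  have h1 := congrFun (hm.range_inj strictMono_id |>.1 (by simp [σ.surjective.range_eq])) a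
  simp [h1]

lemma wt_sum_mkPair {k : ℕ} (I J : Fin k → ℕ) :
    wt (∑ a, Finsupp.single (mkPair (I a) (J a)) 1) = ∑ a, I a * J a := by
  simp only [wt, map_sum, Finsupp.weight_single, mkPair, one_smul, min_mul_max]

lemma prod_Qhat {k : ℕ} (I J : Fin k → ℕ) :
    ∏ a, Qhat (I a) (J a) = monomial (∑ a, Finsupp.single (mkPair (I a) (J a)) 1) 1 := by
  rw [monomial_sum_one]
  rfl

/-- Every monomial is, modulo an ideal containing the `(n + 1)`-minors, a combination of monomials
whose support contains no chain of length `n + 1`. -/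
lemma monomial_mem_sup (n : ℕ) (𝔞 : Ideal QRing)
    (h𝔞 : ∀ I J : Fin (n + 1) → ℕ, StrictMono I → StrictMono J →
      Matrix.det (Matrix.of fun a b : Fin (n + 1) => Qhat (I a) (J b)) ∈ 𝔞)
    (m : SPair →₀ ℕ) :
    monomial m (1 : ℂ) ∈
      restrictSupport ℂ {m : SPair →₀ ℕ | NoChain n m.support} ⊔ 𝔞.restrictScalars ℂ := by
  induction hw : wt m using Nat.strong_induction_on generalizing m with
  | _ w ih =>
  by_cases hm : NoChain n m.support
  · refine Submodule.mem_sup_left ?_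
    rw [mem_restrictSupport_iff]
    intro x hx
    have : x = m := by
      by_contra hne
      simp [coeff_monomial, Ne.symm hne] at hx
    simpa [this] using hm
  simp only [NoChain, not_forall, not_not] at hm
  obtain ⟨l, hl, hlm, hlen⟩ := hm
  let p : Fin (n + 1) → SPair := fun a => l.get (a.cast hlen.symm)
  have hp : ∀ a b, a < b → SLt (p a) (p b) := fun a b hab =>
    List.pairwise_iff_get.1 hl _ _ (by simpa using hab)
  have hpinj : Function.Injective p := by
    intro a b hab
    by_contra hne
    rcases lt_or_gt_of_ne hne with h | h
    · have := (hp _ _ h).1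
      simp [hab] at this
    · have := (hp _ _ h).1
      simp [hab] at this
  let I : Fin (n + 1) → ℕ := fun a => (p a).1.1
  let J : Fin (n + 1) → ℕ := fun a => (p a).1.2
  have hI : StrictMono I := fun a b h => (hp a b h).1
  have hJ : StrictMono J := fun a b h => (hp a b h).2
  have hpair : ∀ a, mkPair (I a) (J a) = p a := fun a => by
    ext <;> simp [mkPair, I, J, (p a).2]
  let d : Equiv.Perm (Fin (n + 1)) → SPair →₀ ℕ := fun σ =>
    ∑ a, Finsupp.single (mkPair (I (σ a)) (J a)) 1
  have hd : d 1 ≤ m := by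
    intro x
    simp only [d, Equiv.Perm.coe_one, id, hpair, Finsupp.finsetSum_apply, Finsupp.single_apply]
    by_cases hx : ∃ a, p a = x
    · obtain ⟨a, rfl⟩ := hx
      have : m (p a) ≠ 0 := Finsupp.mem_support_iff.1 (hlm _ (List.get_mem _ _))
      simp only [hpinj.eq_iff, Finset.sum_ite_eq', Finset.mem_univ, if_true]
      omega
    · push Not at hx
      simp [hx]
  obtain ⟨r, rfl⟩ := le_iff_exists_add.1 hd
  have hdet : monomial r (1 : ℂ) *
      Matrix.det (Matrix.of fun a b : Fin (n + 1) => Qhat (I a) (J b)) =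
      ∑ σ : Equiv.Perm (Fin (n + 1)), Equiv.Perm.sign σ • monomial (d σ + r) (1 : ℂ) := by
    rw [Matrix.det_apply, Finset.mul_sum]
    refine Finset.sum_congr rfl fun σ _ => ?_
    simp only [Matrix.of_apply]
    rw [prod_Qhat (fun a => I (σ a)) J, mul_smul_comm, monomial_mul, one_mul, add_comm r]
  rw [← Finset.add_sum_erase _ _ (Finset.mem_univ 1)] at hdet
  simp only [Equiv.Perm.sign_one, one_smul] at hdet
  rw [eq_sub_of_add_eq hdet.symm]
  refine Submodule.sub_mem _ (Submodule.mem_sup_right ?_) (Submodule.sum_mem _ fun σ hσ => ?_)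
  · exact 𝔞.mul_mem_left _ (h𝔞 I J hI hJ)
  · have hlt : wt (d σ + r) < w := by
      have h1 := sum_perm_lt hI hJ (Finset.ne_of_mem_erase hσ)
      have h2 : wt (d σ) < wt (d 1) := by
        simp only [d]
        rw [wt_sum_mkPair (fun a => I (σ a)) J]
        simpa [wt_sum_mkPair] using h1
      rw [← hw]
      simpa [wt] using h2
    have := ih _ hlt _ rfl
    rcases Int.units_eq_one_or (Equiv.Perm.sign σ) with h | h
    · simpa [h] using this
    · simpa [h] using Submodule.neg_mem _ this

/-! ### Splitting a normal support into antichains -/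

/-- Mirsky's theorem for `≪`: a set without chains of length `n + 1` is a union of `n` antichains.
The minimal elements form the first class. -/
lemma exists_coloring (n : ℕ) (S : Finset SPair) (hS : NoChain n S) :
    ∃ c : SPair → ℕ, (∀ p ∈ S, c p < n) ∧ ∀ p ∈ S, ∀ q ∈ S, c p = c q → ¬ SLt p q := by
  classical
  induction n generalizing S with
  | zero =>
    have : ∀ p, p ∉ S := fun p hp => hS [p] (by simp) (by simpa using hp) rfl
    exact ⟨fun _ => 0, fun p hp => (this p hp).elim, fun p hp => (this p hp).elim⟩
  | succ n ih =>
    have hT : NoChain n (S.filter fun p => ∃ q ∈ S, SLt q p) := by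
      intro l hl hlS hlen
      match l, hl, hlS, hlen with
      | a :: l, hl, hlS, hlen =>
        obtain ⟨q, hq, hqa⟩ := (Finset.mem_filter.1 (hlS a (by simp))).2
        refine hS (q :: a :: l) (List.pairwise_cons.2 ⟨?_, hl⟩) ?_ (by simpa using hlen)
        · intro x hx
          rcases List.mem_cons.1 hx with rfl | hx
          · exact hqa
          · have := (List.pairwise_cons.1 hl).1 x hx
            exact ⟨hqa.1.trans this.1, hqa.2.trans this.2⟩
        · intro x hx
          rcases List.mem_cons.1 hx with rfl | hx
          · exact hq
          · exact (Finset.mem_filter.1 (hlS x hx)).1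
    obtain ⟨c, hc, hc'⟩ := ih _ hT
    refine ⟨fun p => if ∃ q ∈ S, SLt q p then c p + 1 else 0, fun p hp => ?_,
      fun p hp q hq hpq hlt => ?_⟩
    · dsimp only
      split_ifs with h
      · exact Nat.succ_lt_succ (hc p (Finset.mem_filter.2 ⟨hp, h⟩))
      · exact Nat.succ_pos n
    · dsimp only at hpq
      rw [if_pos (⟨p, hp, hlt⟩ : ∃ r ∈ S, SLt r q)] at hpq
      split_ifs at hpq with h
      exact hc' p (Finset.mem_filter.2 ⟨hp, h⟩) q (Finset.mem_filter.2 ⟨hq, p, hp, hlt⟩)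
        (Nat.succ_injective hpq) hlt

/-! ### Nested pairings have the smallest weight -/

section Pairings

variable {n : ℕ}

/-- The exponent of `∏ x_{i,a} x_{i,b}`, over a multiset of pairs `(a, b)` with colours `i`: it
records the coloured endpoints and forgets the pairing. -/
noncomputable def ends (K : Multiset (Fin n × SPair)) : Fin n × ℕ →₀ ℕ :=
  (K.map fun x => Finsupp.single (x.1, x.2.1.1) 1 + Finsupp.single (x.1, x.2.1.2) 1).sum

/-- The weight `∑ a * b` of a multiset of coloured pairs. -/
def cwt (K : Multiset (Fin n × SPair)) : ℕ := (K.map fun x => x.2.1.1 * x.2.1.2).sum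

lemma ends_cons (x : Fin n × SPair) (K : Multiset (Fin n × SPair)) :
    ends (x ::ₘ K) =
      Finsupp.single (x.1, x.2.1.1) 1 + Finsupp.single (x.1, x.2.1.2) 1 + ends K := by
  simp [ends]

lemma cwt_cons (x : Fin n × SPair) (K : Multiset (Fin n × SPair)) :
    cwt (x ::ₘ K) = x.2.1.1 * x.2.1.2 + cwt K := by
  simp [cwt]

lemma ends_ne_zero_iff (K : Multiset (Fin n × SPair)) (i : Fin n) (a : ℕ) :
    ends K (i, a) ≠ 0 ↔ ∃ y ∈ K, y.1 = i ∧ (y.2.1.1 = a ∨ y.2.1.2 = a) := by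
  induction K using Multiset.induction with
  | empty => simp [ends]
  | cons x K ih =>
    rw [ends_cons, Finsupp.add_apply, Finsupp.add_apply]
    simp only [Multiset.mem_cons, or_and_right, exists_or, exists_eq_left, ← ih,
      Finsupp.single_apply, Prod.mk.injEq]
    by_cases h1 : x.1 = i <;> by_cases h2 : x.2.1.1 = a <;> by_cases h3 : x.2.1.2 = a <;>
      simp [h1, h2, h3]

/-- In a nonempty family of coloured antichains, some pair encloses all pairs of its colour. -/
lemma exists_outermost (L : Multiset (Fin n × SPair)) (hL0 : L ≠ 0)
    (hL : ∀ x ∈ L, ∀ y ∈ L, x.1 = y.1 → ¬ SLt x.2 y.2) :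
    ∃ x ∈ L, ∀ y ∈ L, y.1 = x.1 → x.2.1.1 ≤ y.2.1.1 ∧ y.2.1.2 ≤ x.2.1.2 := by
  classical
  obtain ⟨z, hz⟩ := Multiset.exists_mem_of_ne_zero hL0
  obtain ⟨u, hu, humin⟩ := (L.toFinset.filter fun y => y.1 = z.1).exists_min_image
    (fun y => y.2.1.1) ⟨z, by simp [hz]⟩
  obtain ⟨x, hx, hxmax⟩ :=
    (L.toFinset.filter fun y => y.1 = z.1 ∧ y.2.1.1 = u.2.1.1).exists_max_image
    (fun y => y.2.1.2) ⟨u, by simpa using hu⟩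
  simp only [Finset.mem_filter, Multiset.mem_toFinset] at hu humin hx hxmax
  refine ⟨x, hx.1, fun y hy hyx => ?_⟩
  have h1 := humin y ⟨hy, hyx.trans hx.2.1⟩
  refine ⟨by omega, ?_⟩
  by_contra hlt
  by_cases h : y.2.1.1 = u.2.1.1
  · exact hlt (hxmax y ⟨hy, hyx.trans hx.2.1, h⟩)
  · exact hL x hx.1 y hy hyx.symm ⟨by omega, by omega⟩

/-- Among all pairings of given coloured endpoints, the nested one is the unique one of smallest
weight. The induction removes an outermost pair `(a, b)`; if it is missing from `K`, exchanging
`(a, c), (d, b)` for `(a, b), (c, d)` lowers the weight by `(b - c) * (d - a)`. -/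
lemma eq_or_weight_lt (L K : Multiset (Fin n × SPair))
    (hL : ∀ x ∈ L, ∀ y ∈ L, x.1 = y.1 → ¬ SLt x.2 y.2) (h : ends K = ends L) :
    K = L ∨ cwt L < cwt K := by
  classical
  induction hk : L.card generalizing L K with
  | zero =>
    obtain rfl := Multiset.card_eq_zero.1 hk
    left
    by_contra hK
    obtain ⟨y, hy⟩ := Multiset.exists_mem_of_ne_zero hK
    have := (ends_ne_zero_iff K y.1 y.2.1.1).2 ⟨y, hy, rfl, Or.inl rfl⟩
    rw [h] at this
    simp [ends] at this
  | succ k ih =>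
    obtain ⟨x, hx, hout⟩ := exists_outermost L (by rintro rfl; simp at hk) hL
    have hKb : ∀ y ∈ K, y.1 = x.1 → x.2.1.1 ≤ y.2.1.1 ∧ y.2.1.2 ≤ x.2.1.2 := by
      intro y hy hyx
      have h1 := (ends_ne_zero_iff K y.1 y.2.1.1).2 ⟨y, hy, rfl, Or.inl rfl⟩
      have h2 := (ends_ne_zero_iff K y.1 y.2.1.2).2 ⟨y, hy, rfl, Or.inr rfl⟩
      rw [h, ends_ne_zero_iff] at h1 h2
      obtain ⟨u, hu, hu1, hu2⟩ := h1
      obtain ⟨v, hv, hv1, hv2⟩ := h2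
      have h3 := hout u hu (hu1.trans hyx)
      have h4 := hout v hv (hv1.trans hyx)
      have h5 := u.2.2
      have h6 := v.2.2
      omega
    have hxa : ends K (x.1, x.2.1.1) ≠ 0 := by
      rw [h, ends_ne_zero_iff]; exact ⟨x, hx, rfl, Or.inl rfl⟩
    have hxb : ends K (x.1, x.2.1.2) ≠ 0 := by
      rw [h, ends_ne_zero_iff]; exact ⟨x, hx, rfl, Or.inr rfl⟩
    obtain ⟨L', rfl⟩ := Multiset.exists_cons_of_mem hx
    have hL' : ∀ x ∈ L', ∀ y ∈ L', x.1 = y.1 → ¬ SLt x.2 y.2 := fun u hu v hv =>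
      hL u (Multiset.mem_cons_of_mem hu) v (Multiset.mem_cons_of_mem hv)
    have hk' : L'.card = k := by simpa using hk
    by_cases hxK : x ∈ K
    · obtain ⟨K', rfl⟩ := Multiset.exists_cons_of_mem hxK
      rw [ends_cons, ends_cons] at h
      rcases ih L' K' hL' (add_left_cancel h) hk' with h | h
      · exact Or.inl (by rw [h])
      · exact Or.inr (by rw [cwt_cons, cwt_cons]; omega)
    · right
      obtain ⟨y, hy, hy1, hy2⟩ := (ends_ne_zero_iff _ _ _).1 hxa
      obtain ⟨z, hz, hz1, hz2⟩ := (ends_ne_zero_iff _ _ _).1 hxb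
      have hyb := hKb y hy hy1
      have hzb := hKb z hz hz1
      have hy3 := y.2.2
      have hz3 := z.2.2
      have hya : y.2.1.1 = x.2.1.1 := by omega
      have hza : z.2.1.2 = x.2.1.2 := by omega
      have hyne : y.2.1.2 ≠ x.2.1.2 := fun he => hxK (by
        rwa [← (Prod.ext hy1 (Subtype.ext (Prod.ext hya he)) : y = x)])
      have hzne : z.2.1.1 ≠ x.2.1.1 := fun he => hxK (by
        rwa [← (Prod.ext hz1 (Subtype.ext (Prod.ext he hza)) : z = x)])
      have hzy : z ≠ y := by rintro rfl; exact hyne hza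
      obtain ⟨K₁, rfl⟩ := Multiset.exists_cons_of_mem hy
      obtain ⟨K₂, rfl⟩ := Multiset.exists_cons_of_mem ((Multiset.mem_cons.1 hz).resolve_left hzy)
      have hE : ends ((x.1, mkPair y.2.1.2 z.2.1.1) ::ₘ K₂) = ends L' := by
        have hmm : Finsupp.single (x.1, min y.2.1.2 z.2.1.1) 1
            + Finsupp.single (x.1, max y.2.1.2 z.2.1.1) 1
            = (Finsupp.single (x.1, y.2.1.2) 1 + Finsupp.single (x.1, z.2.1.1) 1 :
              Fin n × ℕ →₀ ℕ) := by
          rcases le_total y.2.1.2 z.2.1.1 with h | h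
          · rw [min_eq_left h, max_eq_right h]
          · rw [min_eq_right h, max_eq_left h, add_comm]
        rw [ends_cons, ends_cons, ends_cons, hy1, hz1, hya, hza] at h
        rw [ends_cons]
        simp only [mkPair]
        rw [hmm]
        refine add_left_cancel (Eq.trans ?_ h)
        abel
      have hle : cwt L' ≤ cwt ((x.1, mkPair y.2.1.2 z.2.1.1) ::ₘ K₂) := by
        rcases ih L' _ hL' hE hk' with h | h
        · rw [h]
        · exact h.le
      rw [cwt_cons] at hle
      simp only [mkPair, min_mul_max] at hle
      rw [cwt_cons, cwt_cons, cwt_cons, hya, hza]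
      have h1 : y.2.1.2 < x.2.1.2 := by omega
      have h2 : x.2.1.1 < z.2.1.1 := by omega
      obtain ⟨s, hs⟩ := Nat.exists_eq_add_of_lt h1
      obtain ⟨t, ht⟩ := Nat.exists_eq_add_of_lt h2
      rw [ht] at hle ⊢
      rw [hs]
      nlinarith

/-! ### Independence of the images of normal monomials -/

/-- Expanding `∏ q_{a,b}` over all colourings of the factors. -/
lemma prod_qO_expand (s : Multiset SPair) :
    ∃ T : Multiset (Multiset (Fin n × SPair)),
      (s.map fun p => qO n p.1.1 p.1.2).prod = (T.map fun K => monomial (ends K) (1 : ℂ)).sum ∧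
      ∀ K, K ∈ T ↔ K.map Prod.snd = s := by
  classical
  induction s using Multiset.induction with
  | empty => exact ⟨{0}, by simp [ends], by simp⟩
  | cons p s ih =>
    obtain ⟨T, hT, hmem⟩ := ih
    refine ⟨T.bind fun K => Finset.univ.val.map fun i => (i, p) ::ₘ K, ?_, fun K => ?_⟩
    · rw [Multiset.map_cons, Multiset.prod_cons, hT, Multiset.map_bind, Multiset.sum_bind,
        ← Multiset.sum_map_mul_left]
      congr 1
      refine Multiset.map_congr rfl fun K _ => ?_
      rw [Multiset.map_map, qO, Finset.sum_mul]
      change _ = ∑ i, _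
      refine Finset.sum_congr rfl fun i _ => ?_
      simp only [Function.comp, ends_cons, X, monomial_mul, one_mul]
    · simp only [Multiset.mem_bind, Multiset.mem_map, Finset.mem_val, Finset.mem_univ, true_and,
        hmem]
      constructor
      · rintro ⟨K', hK', i, rfl⟩
        simp [hK']
      · intro h
        obtain ⟨x, hx, hxp, hs⟩ := (Multiset.map_eq_cons _ _ _ _).2 h
        exact ⟨K.erase x, hs, x.1, by rw [← hxp]; exact Multiset.cons_erase hx⟩

/-- A monomial of `P` occurs in `φ(m)` exactly when it comes from a colouring of `m`. -/
lemma coeff_phiO_monomial_ne_zero (m : SPair →₀ ℕ) (e : Fin n × ℕ →₀ ℕ) :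
    coeff e (phiO n (monomial m 1)) ≠ 0 ↔
      ∃ K : Multiset (Fin n × SPair), K.map Prod.snd = Finsupp.toMultiset m ∧ ends K = e := by
  classical
  obtain ⟨T, hT, hmem⟩ := prod_qO_expand (n := n) (Finsupp.toMultiset m)
  have h1 : phiO n (monomial m 1) = (T.map fun K => monomial (ends K) (1 : ℂ)).sum := by
    rw [← hT, phiO, aeval_monomial, map_one, one_mul, Finsupp.toMultiset_map,
      Finsupp.prod_toMultiset, Finsupp.prod_mapDomain_index (by simp) (by intros; rw [pow_add])]
  have h2 : ∀ T : Multiset (Multiset (Fin n × SPair)),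
      coeff e (T.map fun K => monomial (ends K) (1 : ℂ)).sum
        = (T.countP fun K => ends K = e : ℕ) := by
    intro T
    induction T using Multiset.induction with
    | empty => simp
    | cons K T ih =>
      rw [Multiset.map_cons, Multiset.sum_cons, coeff_add, ih, coeff_monomial,
        Multiset.countP_cons]
      split_ifs <;> simp [add_comm]
  rw [h1, h2, Nat.cast_ne_zero, ← Nat.pos_iff_ne_zero, Multiset.countP_pos]
  simp only [hmem]

lemma cwt_eq_wt (K : Multiset (Fin n × SPair)) (m : SPair →₀ ℕ)
    (h : K.map Prod.snd = Finsupp.toMultiset m) : cwt K = wt m := by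
  have h1 : cwt K = ((K.map Prod.snd).map fun p : SPair => p.1.1 * p.1.2).sum := by
    simp [cwt, Multiset.map_map]
  rw [h1, h, wt]
  clear h h1
  induction m using Finsupp.induction_linear with
  | zero => simp
  | add f g hf hg => simp [hf, hg]
  | single p k => simp [Finsupp.weight_single, Multiset.map_nsmul, Multiset.sum_nsmul]

lemma eq_zero_of_phiO_eq_zero (hn : 1 ≤ n) (g : QRing)
    (hg : ∀ m ∈ g.support, NoChain n m.support) (h0 : phiO n g = 0) : g = 0 := by
  classical
  by_contra hne
  obtain ⟨m, hm, hmax⟩ := g.support.exists_max_image wt (support_nonempty.2 hne)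
  obtain ⟨c, hc, hc'⟩ := exists_coloring n _ (hg m hm)
  let L : Multiset (Fin n × SPair) :=
    (Finsupp.toMultiset m).map fun p => (⟨c p % n, Nat.mod_lt _ hn⟩, p)
  have hLm : L.map Prod.snd = Finsupp.toMultiset m := by simp [L, Multiset.map_map]
  have hL : ∀ x ∈ L, ∀ y ∈ L, x.1 = y.1 → ¬ SLt x.2 y.2 := by
    intro x hx y hy hxy
    obtain ⟨p, hp, rfl⟩ := Multiset.mem_map.1 hx
    obtain ⟨q, hq, rfl⟩ := Multiset.mem_map.1 hy
    rw [Finsupp.mem_toMultiset] at hp hq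
    simp only [Fin.mk.injEq, Nat.mod_eq_of_lt (hc p hp), Nat.mod_eq_of_lt (hc q hq)] at hxy
    exact hc' p hp q hq hxy
  have hexp : coeff (ends L) (phiO n g) =
      ∑ m' ∈ g.support, coeff m' g * coeff (ends L) (phiO n (monomial m' 1)) := by
    conv_lhs => rw [g.as_sum]
    rw [map_sum, coeff_sum]
    refine Finset.sum_congr rfl fun m' _ => ?_
    rw [← coeff_C_mul, ← mul_one (coeff m' g), ← smul_eq_mul, ← smul_monomial, map_smul,
      smul_eq_mul, mul_one, smul_eq_C_mul]
  rw [h0, coeff_zero, Finset.sum_eq_single_of_mem m hm] at hexp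
  · exact mul_ne_zero (mem_support_iff.1 hm)
      ((coeff_phiO_monomial_ne_zero m _).2 ⟨L, hLm, rfl⟩) hexp.symm
  · intro m' hm' hmm
    refine mul_eq_zero_of_right _ ?_
    by_contra hcoe
    obtain ⟨K, hK, hKL⟩ := (coeff_phiO_monomial_ne_zero m' _).1 hcoe
    rcases eq_or_weight_lt L K hL hKL with rfl | hlt
    · exact hmm (Multiset.toFinsupp.symm.injective (hK.symm.trans hLm))
    · rw [cwt_eq_wt L m hLm, cwt_eq_wt K m' hK] at hlt
      exact absurd (hmax m' hm') (not_le.2 hlt)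

end Pairings

/-- Second fundamental theorem of invariant theory for `O(n, ℂ)` (Weyl): the
kernel of `φ` is generated by the `(n+1) × (n+1)` determinants `d_{I,J}` for
strictly increasing tuples `I`, `J`. -/
theorem sft_orthogonal (n : ℕ) (hn : 1 ≤ n) :
    RingHom.ker (phiO n) =
      Ideal.span { d : QRing | ∃ I J : Fin (n + 1) → ℕ,
        StrictMono I ∧ StrictMono J ∧
        d = Matrix.det (Matrix.of fun a b : Fin (n + 1) => Qhat (I a) (J b)) } := by
  set 𝔞 : Ideal QRing := Ideal.span _ with h𝔞
  have hle : 𝔞 ≤ RingHom.ker (phiO n) := by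
    rw [h𝔞, Ideal.span_le]
    rintro _ ⟨I, J, -, -, rfl⟩
    exact phiO_det n I J
  refine le_antisymm (fun f hf => ?_) hle
  have hmon := monomial_mem_sup n 𝔞 fun I J hI hJ => Ideal.subset_span ⟨I, J, hI, hJ, rfl⟩
  have hmem : f ∈ restrictSupport ℂ {m : SPair →₀ ℕ | NoChain n m.support} ⊔
      𝔞.restrictScalars ℂ := by
    rw [f.as_sum]
    refine Submodule.sum_mem _ fun m _ => ?_
    rw [← mul_one (coeff m f), ← smul_eq_mul, ← smul_monomial]
    exact Submodule.smul_mem _ _ (hmon m)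
  obtain ⟨g, hg, r, hr, rfl⟩ := Submodule.mem_sup.1 hmem
  have hr' : phiO n r = 0 := hle hr
  have hg0 : phiO n g = 0 := by
    have : phiO n (g + r) = 0 := hf
    rwa [map_add, hr', add_zero] at this
  rw [mem_restrictSupport_iff] at hg
  rw [eq_zero_of_phiO_eq_zero hn g (fun m hm => hg hm) hg0, zero_add]
  exact hr
end

section
/- Let P = MvPolynomial (ℕ × Fin 3) ℂ, with the three variables indexed by n ∈ ℕ written as a^h_n, a^x_n, a^y_n. Let D_h, D_x, D_y be the ℂ-derivations of P determined on variables by: D_h(a^h_n) = 0, D_h(a^x_n) = 2a^x_n, D_h(a^y_n) = −2a^y_n; D_x(a^h_n) = −2a^x_n, D_x(a^x_n) = 0, D_x(a^y_n) = a^h_n; D_y(a^h_n) = 2a^y_n, D_y(a^x_n) = −a^h_n, D_y(a^y_n) = 0. For i, j ∈ ℕ define q_{ij} = a^h_i a^h_j + 2 a^x_i a^y_j + 2 a^x_j a^y_i ∈ P, and for k, l, m ∈ ℕ define c_{klm} ∈ P as the determinant of the 3 × 3 matrix with rows (a^h_k, a^x_k, a^y_k), (a^h_l, a^x_l, a^y_l),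 (a^h_m, a^x_m, a^y_m). Then the set of p ∈ P with D_h(p) = D_x(p) = D_y(p) = 0 equals the ℂ-subalgebra of P generated by {q_{ij} : i ≤ j} ∪ {c_{klm} : k < l < m}. -/
/-!
The adjoint representation of `sl₂` is the standard representation of `so₃`: in the coordinates
`h = e⁰`, `x = (e¹ + i e²) / 2`, `y = (e¹ - i e²) / 2` the form `q` becomes the standard scalar
product, and `D_h, D_x, D_y` span the same space as the rotations `E_{αβ} - E_{βα}`, where
`E_{αβ} = ∑ i, e_i^α ∂_i^β`. As a polynomial involves finitely many copies only, the theorem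
reduces to the first fundamental theorem for `so₃` acting on finitely many vectors
(`mem_genAlg_of_isInv`): invariants are polynomials in scalar products and determinants.

That theorem is proved by induction on the degree, with the Fischer inner product on polynomials,
for which multiplication by a variable is adjoint to the corresponding partial derivative. Let `A`
be the algebra generated by scalar products and determinants, and let `b` be an invariant of degree
at most `n` orthogonal to all elements of `A` of degree at most `n`. The operators adjoint to
multiplication by a scalar product or a determinant are the polarized Laplacians
`Δ_ij = ∑ γ, ∂_i^γ ∂_j^γ` and Cayley's operators `Ω_klm`. They preserve invariance and lower the
degree, so `Δ_ij b` and `Ω_klm b` lie in `A` by induction, and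
`‖Δ_ij b‖² = ⟨q_ij Δ_ij b, b⟩ = 0`; likewise `Ω_klm b = 0`.

It remains to show that such a `b` vanishes (`eq_zero_of_harmonic`). For every polynomial,
`∑ ⟨E_{βα} b, E_{αβ} b⟩ = ∑ ‖∂_i^α b‖² + ∑ ‖Δ_ij b‖²`; combined with `E_{βα} b = E_{αβ} b` and
`‖E_{αα} b‖² = ∑ ‖∂_i^α b‖² + ∑ ‖∂_i^α ∂_j^α b‖²`, this shows that `E_{αβ} b = 0` for `α ≠ β` and
`∂_i^α ∂_j^α b = 0` (`harmonic_aux`). Differentiating `E_{αβ} b = 0`, the second derivatives of `b`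
are skew in the upper indices, so `Ω_klm b = 6 ∂_k^0 ∂_l^1 ∂_m^2 b`, and this vanishes. Feeding this
back into the derivatives of `E_{01} b = 0` gives `∂_k^1 ∂_m^2 b = 0`, whence all first derivatives
of `b` vanish. So `b` is a constant orthogonal to `1`.
-/

open MvPolynomial

/-- The variable `a^h_n` of the `n`-th copy of the adjoint representation of `sl₂`. -/
noncomputable abbrev aH (n : ℕ) : MvPolynomial (ℕ × Fin 3) ℂ := X (n, 0)

/-- The variable `a^x_n`. -/
noncomputable abbrev aX (n : ℕ) : MvPolynomial (ℕ × Fin 3) ℂ := X (n, 1)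

/-- The variable `a^y_n`. -/
noncomputable abbrev aY (n : ℕ) : MvPolynomial (ℕ × Fin 3) ℂ := X (n, 2)

/-- The quadratic invariants `q_{ij} = a^h_i a^h_j + 2 a^x_i a^y_j + 2 a^x_j a^y_i`. -/
noncomputable def qsl (i j : ℕ) : MvPolynomial (ℕ × Fin 3) ℂ :=
  aH i * aH j + 2 * aX i * aY j + 2 * aX j * aY i

/-- The cubic invariants `c_{klm}`, the `3 × 3` determinant with rows
`(a^h_k, a^x_k, a^y_k)`, `(a^h_l, a^x_l, a^y_l)`, `(a^h_m, a^x_m, a^y_m)`. -/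
noncomputable def csl (k l m : ℕ) : MvPolynomial (ℕ × Fin 3) ℂ :=
  Matrix.det !![aH k, aX k, aY k; aH l, aX l, aY l; aH m, aX m, aY m]

/-! ### The Fischer inner product -/

section Fischer

variable {σ : Type*}

/-- The factorial `∏ s, (m s)!` of a multi-index. -/
def multiFact (m : σ →₀ ℕ) : ℕ := m.prod fun _ k => k.factorial

lemma multiFact_pos (m : σ →₀ ℕ) : 0 < multiFact m :=
  Finset.prod_pos fun _ _ => Nat.factorial_pos _

lemma multiFact_single_add (s : σ) (m : σ →₀ ℕ) :
    multiFact (Finsupp.single s 1 + m) = (m s + 1) * multiFact m := by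
  classical
  have hsub : ∀ n : σ →₀ ℕ, n.support ⊆ insert s m.support →
      multiFact n = (n s).factorial * ∏ t ∈ m.support.erase s, (n t).factorial := by
    intro n hn
    rw [multiFact, Finsupp.prod_of_support_subset n hn _ (by simp),
      ← Finset.mul_prod_erase _ _ (Finset.mem_insert_self s _), Finset.erase_insert_eq_erase]
  rw [hsub _ (Finsupp.support_add.trans ?_), hsub m (Finset.subset_insert _ _)]
  · have : ∀ t ∈ m.support.erase s, ((Finsupp.single s 1 + m : σ →₀ ℕ) t).factorial =
        (m t).factorial := by
      intro t ht
      simp [Finsupp.single_eq_of_ne (Finset.ne_of_mem_erase ht)]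
    rw [Finset.prod_congr rfl this]
    simp [add_comm 1 (m s), Nat.factorial_succ, mul_assoc]
  · intro t ht
    rcases Finset.mem_union.1 ht with h | h
    · have := Finsupp.support_single_subset h
      simp_all
    · exact Finset.mem_insert_of_mem h

/-- The Fischer inner product on polynomials, conjugate-linear in the first argument: monomials are
pairwise orthogonal and `⟨X^m, X^m⟩ = m!`. -/
noncomputable def fischer (f g : MvPolynomial σ ℂ) : ℂ :=
  ∑ m ∈ f.support, (multiFact m : ℂ) * ((starRingEnd ℂ) (coeff m f) * coeff m g)

lemma fischer_eq_sum {f : MvPolynomial σ ℂ} {S : Finset (σ →₀ ℕ)} (hS : f.support ⊆ S)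
    (g : MvPolynomial σ ℂ) :
    fischer f g = ∑ m ∈ S, (multiFact m : ℂ) * ((starRingEnd ℂ) (coeff m f) * coeff m g) := by
  refine Finset.sum_subset hS fun m _ hm => ?_
  rw [notMem_support_iff.1 hm]
  simp

lemma fischer_add_left (f f' g : MvPolynomial σ ℂ) :
    fischer (f + f') g = fischer f g + fischer f' g := by
  classical
  rw [fischer_eq_sum (S := f.support ∪ f'.support) support_add,
    fischer_eq_sum (f := f) (S := f.support ∪ f'.support) Finset.subset_union_left,
    fischer_eq_sum (f := f') (S := f.support ∪ f'.support) Finset.subset_union_right,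
    ← Finset.sum_add_distrib]
  refine Finset.sum_congr rfl fun m _ => ?_
  simp only [coeff_add, map_add]
  ring

lemma fischer_smul_left (c : ℂ) (f g : MvPolynomial σ ℂ) :
    fischer (c • f) g = (starRingEnd ℂ) c * fischer f g := by
  rw [fischer_eq_sum (S := f.support) support_smul, fischer, Finset.mul_sum]
  refine Finset.sum_congr rfl fun m _ => ?_
  simp only [coeff_smul, smul_eq_mul, map_mul]
  ring

lemma fischer_conj_symm (f g : MvPolynomial σ ℂ) :
    (starRingEnd ℂ) (fischer g f) = fischer f g := by
  classical
  rw [fischer_eq_sum (f := g) (S := f.support ∪ g.support) Finset.subset_union_right,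
    fischer_eq_sum (f := f) (S := f.support ∪ g.support) Finset.subset_union_left, map_sum]
  refine Finset.sum_congr rfl fun m _ => ?_
  simp only [map_mul, Complex.conj_conj, map_natCast]
  ring

lemma fischer_self (f : MvPolynomial σ ℂ) :
    fischer f f = ((∑ m ∈ f.support, (multiFact m : ℝ) * Complex.normSq (coeff m f) : ℝ) : ℂ) := by
  rw [fischer]
  push_cast
  refine Finset.sum_congr rfl fun m _ => ?_
  rw [Complex.normSq_eq_conj_mul_self]

lemma fischer_self_re_nonneg (f : MvPolynomial σ ℂ) : 0 ≤ (fischer f f).re := by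
  rw [fischer_self, Complex.ofReal_re]
  exact Finset.sum_nonneg fun m _ => mul_nonneg (Nat.cast_nonneg _) (Complex.normSq_nonneg _)

lemma eq_zero_of_fischer_self_re {f : MvPolynomial σ ℂ} (h : (fischer f f).re = 0) : f = 0 := by
  rw [fischer_self, Complex.ofReal_re, Finset.sum_eq_zero_iff_of_nonneg
    fun m _ => mul_nonneg (Nat.cast_nonneg _) (Complex.normSq_nonneg _)] at h
  ext m
  by_contra hm
  have := h m (mem_support_iff.2 hm)
  rcases mul_eq_zero.1 this with h0 | h0
  · exact (multiFact_pos m).ne' (by exact_mod_cast h0)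
  · exact hm (Complex.normSq_eq_zero.1 h0)

/-- Multiplication by a variable is adjoint to the corresponding partial derivative. -/
lemma fischer_X_mul (s : σ) (f g : MvPolynomial σ ℂ) :
    fischer (X s * f) g = fischer f (pderiv s g) := by
  rw [fischer, support_X_mul, Finset.sum_map, fischer]
  refine Finset.sum_congr rfl fun m _ => ?_
  simp only [addLeftEmbedding_apply, multiFact_single_add, coeff_X_mul, coeff_pderiv]
  push_cast
  rw [add_comm m]
  ring

lemma fischer_mul_X (s : σ) (f g : MvPolynomial σ ℂ) :
    fischer f (X s * g) = fischer (pderiv s f) g := by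
  rw [← fischer_conj_symm, fischer_X_mul, fischer_conj_symm]

lemma fischer_add_right (f g g' : MvPolynomial σ ℂ) :
    fischer f (g + g') = fischer f g + fischer f g' := by
  rw [← fischer_conj_symm, fischer_add_left, map_add, fischer_conj_symm, fischer_conj_symm]

/-- `fischer f` as an additive map, which makes the `map_sum`, `map_sub`, ... API available. -/
noncomputable def fischerHom (f : MvPolynomial σ ℂ) : MvPolynomial σ ℂ →+ ℂ :=
  AddMonoidHom.mk' (fischer f) (fischer_add_right f)

lemma fischer_sum_right {κ : Type*} (S : Finset κ) (f : MvPolynomial σ ℂ)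
    (g : κ → MvPolynomial σ ℂ) : fischer f (∑ k ∈ S, g k) = ∑ k ∈ S, fischer f (g k) :=
  map_sum (fischerHom f) g S

lemma fischer_sub_right (f g g' : MvPolynomial σ ℂ) :
    fischer f (g - g') = fischer f g - fischer f g' :=
  map_sub (fischerHom f) g g'

lemma fischer_zero_right (f : MvPolynomial σ ℂ) : fischer f 0 = 0 := map_zero (fischerHom f)

lemma fischer_sum_left {κ : Type*} (S : Finset κ) (f : κ → MvPolynomial σ ℂ)
    (g : MvPolynomial σ ℂ) : fischer (∑ k ∈ S, f k) g = ∑ k ∈ S, fischer (f k) g := by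
  rw [← fischer_conj_symm, fischer_sum_right, map_sum]
  exact Finset.sum_congr rfl fun k _ => fischer_conj_symm _ _

lemma fischer_sub_left (f f' g : MvPolynomial σ ℂ) :
    fischer (f - f') g = fischer f g - fischer f' g := by
  rw [← fischer_conj_symm, fischer_sub_right, map_sub, fischer_conj_symm, fischer_conj_symm]

/-- Orthogonal decomposition along a finite-dimensional space of polynomials. -/
lemma exists_fischer_decomp (K : Submodule ℂ (MvPolynomial σ ℂ)) [FiniteDimensional ℂ K]
    (f : MvPolynomial σ ℂ) :
    ∃ a ∈ K, ∃ b, (∀ u ∈ K, fischer u b = 0) ∧ f = a + b := by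
  let core : InnerProductSpace.Core ℂ (MvPolynomial σ ℂ) :=
    { inner := fischer
      conj_inner_symm := fischer_conj_symm
      re_inner_nonneg := fischer_self_re_nonneg
      add_left := fischer_add_left
      smul_left := fun f g c => fischer_smul_left c f g
      definite := fun f h => eq_zero_of_fischer_self_re (by
        have h' : fischer f f = 0 := h
        rw [h', Complex.zero_re]) }
  let _ : NormedAddCommGroup (MvPolynomial σ ℂ) := core.toNormedAddCommGroup
  let _ : InnerProductSpace ℂ (MvPolynomial σ ℂ) := InnerProductSpace.ofCore core.toCore
  obtain ⟨a, ha, b, hb, h⟩ := K.exists_add_mem_mem_orthogonal f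
  exact ⟨a, ha, b, fun u hu => (Submodule.mem_orthogonal K b).1 hb u hu, h⟩

/-- A polynomial all of whose derivatives vanish and which is orthogonal to `1` is zero. -/
lemma eq_zero_of_pderiv_eq_zero {b : MvPolynomial σ ℂ} (h1 : fischer 1 b = 0)
    (hb : ∀ s, pderiv s b = 0) : b = 0 := by
  have key : ∀ p : MvPolynomial σ ℂ, fischer p b = 0 := by
    intro p
    induction p using MvPolynomial.induction_on with
    | C c => rw [← mul_one (C c), ← smul_eq_C_mul, fischer_smul_left, h1, mul_zero]
    | add p q hp hq => rw [fischer_add_left, hp, hq, add_zero]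
    | mul_X p s _ => rw [mul_comm, fischer_X_mul, hb, fischer_zero_right]
  exact eq_zero_of_fischer_self_re (by rw [key, Complex.zero_re])

lemma pderiv_comm (s t : σ) (f : MvPolynomial σ ℂ) :
    pderiv s (pderiv t f) = pderiv t (pderiv s f) := by
  classical
  have h : ⁅pderiv (R := ℂ) s, pderiv (R := ℂ) t⁆ = 0 := by
    refine derivation_ext fun i => ?_
    rw [Derivation.commutator_apply]
    simp only [pderiv_X, Pi.single_apply]
    split_ifs <;> simp
  have := DFunLike.congr_fun h f
  rw [Derivation.commutator_apply] at this
  exact sub_eq_zero.1 this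

lemma totalDegree_pderiv_le {s : σ} {f : MvPolynomial σ ℂ} {n : ℕ} (hf : f.totalDegree ≤ n + 1) :
    (pderiv s f).totalDegree ≤ n := by
  refine Finset.sup_le fun m hm => ?_
  rw [mem_support_iff, coeff_pderiv] at hm
  have := le_totalDegree (mem_support_iff.2 (left_ne_zero_of_mul hm))
  rw [Finsupp.sum_add_index' (by simp) (by simp)] at this
  simp at this
  omega

lemma pderiv_eq_zero_of_totalDegree {s : σ} {f : MvPolynomial σ ℂ} (hf : f.totalDegree ≤ 0) :
    pderiv s f = 0 := by
  rw [totalDegree_eq_zero_iff_eq_C.1 (Nat.le_zero.1 hf), pderiv_C]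

end Fischer

/-! ### Invariants of `so₃` in orthonormal coordinates -/

section Orthogonal

variable {ι : Type*}

/-- The scalar product of the `i`-th and `j`-th vector. -/
noncomputable def dotP (i j : ι) : MvPolynomial (ι × Fin 3) ℂ := ∑ γ, X (i, γ) * X (j, γ)

/-- The determinant of the `k`-th, `l`-th and `m`-th vector, expanded. -/
noncomputable def detP (k l m : ι) : MvPolynomial (ι × Fin 3) ℂ :=
  X (k, 0) * (X (l, 1) * X (m, 2)) - X (k, 0) * (X (l, 2) * X (m, 1))
    - X (k, 1) * (X (l, 0) * X (m, 2)) + X (k, 1) * (X (l, 2) * X (m, 0))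
    + X (k, 2) * (X (l, 0) * X (m, 1)) - X (k, 2) * (X (l, 1) * X (m, 0))

/-- The differential operator obtained from `dotP i j` by replacing variables by partial
derivatives (a polarized Laplacian). -/
noncomputable def lap (i j : ι) (f : MvPolynomial (ι × Fin 3) ℂ) : MvPolynomial (ι × Fin 3) ℂ :=
  ∑ γ, pderiv (i, γ) (pderiv (j, γ) f)

/-- The differential operator obtained from `detP k l m` by replacing variables by partial
derivatives (Cayley's `Ω`-process). -/
noncomputable def cayley (k l m : ι) (f : MvPolynomial (ι × Fin 3) ℂ) :
    MvPolynomial (ι × Fin 3) ℂ :=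
  pderiv (k, 0) (pderiv (l, 1) (pderiv (m, 2) f)) - pderiv (k, 0) (pderiv (l, 2) (pderiv (m, 1) f))
    - pderiv (k, 1) (pderiv (l, 0) (pderiv (m, 2) f))
    + pderiv (k, 1) (pderiv (l, 2) (pderiv (m, 0) f))
    + pderiv (k, 2) (pderiv (l, 0) (pderiv (m, 1) f))
    - pderiv (k, 2) (pderiv (l, 1) (pderiv (m, 0) f))

lemma fischer_dotP_mul (i j : ι) (f g : MvPolynomial (ι × Fin 3) ℂ) :
    fischer (dotP i j * f) g = fischer f (lap i j g) := by
  simp only [dotP, lap, Finset.sum_mul, fischer_sum_left, fischer_sum_right, mul_assoc,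
    fischer_X_mul, pderiv_comm (i, _)]

lemma fischer_detP_mul (k l m : ι) (f g : MvPolynomial (ι × Fin 3) ℂ) :
    fischer (detP k l m * f) g = fischer f (cayley k l m g) := by
  simp only [detP, cayley, sub_mul, add_mul, fischer_sub_left, fischer_add_left,
    fischer_sub_right, fischer_add_right, mul_assoc, fischer_X_mul]
  simp only [pderiv_comm (m, _) (l, _), pderiv_comm (m, _) (k, _), pderiv_comm (l, _) (k, _)]

/-- The algebra generated by all scalar products and determinants. -/
noncomputable def genAlg (ι : Type*) : Subalgebra ℂ (MvPolynomial (ι × Fin 3) ℂ) :=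
  Algebra.adjoin ℂ ({p | ∃ i j, p = dotP i j} ∪ {p | ∃ k l m, p = detP k l m})

lemma dotP_mem (i j : ι) : dotP i j ∈ genAlg ι := Algebra.subset_adjoin (Or.inl ⟨i, j, rfl⟩)

lemma detP_mem (k l m : ι) : detP k l m ∈ genAlg ι :=
  Algebra.subset_adjoin (Or.inr ⟨k, l, m, rfl⟩)

lemma totalDegree_dotP_mul_le (i j : ι) {g : MvPolynomial (ι × Fin 3) ℂ} {n : ℕ}
    (hg : g.totalDegree ≤ n) : (dotP i j * g).totalDegree ≤ n + 2 := by
  have h : (dotP i j : MvPolynomial (ι × Fin 3) ℂ).IsHomogeneous 2 :=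
    IsHomogeneous.sum _ _ _ fun γ _ => (isHomogeneous_X ℂ _).mul (isHomogeneous_X ℂ _)
  have := totalDegree_mul (dotP i j) g
  have := h.totalDegree_le
  omega

lemma totalDegree_detP_mul_le (k l m : ι) {g : MvPolynomial (ι × Fin 3) ℂ} {n : ℕ}
    (hg : g.totalDegree ≤ n) : (detP k l m * g).totalDegree ≤ n + 3 := by
  have h3 : ∀ a b c : ι × Fin 3,
      (X a * (X b * X c) : MvPolynomial (ι × Fin 3) ℂ).IsHomogeneous 3 := fun a b c =>
    (isHomogeneous_X ℂ a).mul ((isHomogeneous_X ℂ b).mul (isHomogeneous_X ℂ c))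
  have h : (detP k l m : MvPolynomial (ι × Fin 3) ℂ).IsHomogeneous 3 :=
    (((((h3 _ _ _).sub (h3 _ _ _)).sub (h3 _ _ _)).add (h3 _ _ _)).add (h3 _ _ _)).sub (h3 _ _ _)
  have := totalDegree_mul (detP k l m) g
  have := h.totalDegree_le
  omega

variable [Fintype ι]

/-- The polarization operator `E_{αβ} = ∑ i, e_i^α ∂/∂e_i^β` on the polynomials in `ι` copies of
`ℂ³`; these derivations span the action of `gl₃`. -/
noncomputable def pol (α β : Fin 3) :
    Derivation ℂ (MvPolynomial (ι × Fin 3) ℂ) (MvPolynomial (ι × Fin 3) ℂ) :=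
  ∑ i : ι, (X (i, α) : MvPolynomial (ι × Fin 3) ℂ) • pderiv (i, β)

lemma pol_apply (α β : Fin 3) (f : MvPolynomial (ι × Fin 3) ℂ) :
    pol α β f = ∑ i, X (i, α) * pderiv (i, β) f := by
  rw [pol, ← Derivation.coeFnAddMonoidHom_apply, map_sum, Finset.sum_apply]
  rfl

lemma pol_X (α β γ : Fin 3) (i : ι) :
    pol α β (X (i, γ) : MvPolynomial (ι × Fin 3) ℂ) = if γ = β then X (i, α) else 0 := by
  rw [pol_apply, Finset.sum_eq_single i]
  · by_cases h : γ = β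
    · subst h; simp
    · rw [pderiv_X_of_ne (by simpa using h), mul_zero, if_neg h]
  · intro j _ hj
    rw [pderiv_X_of_ne (by simp [hj.symm]), mul_zero]
  · simp

lemma pderiv_pol (α β γ : Fin 3) (k : ι) (f : MvPolynomial (ι × Fin 3) ℂ) :
    pderiv (k, γ) (pol α β f) =
      (if γ = α then pderiv (k, β) f else 0) + pol α β (pderiv (k, γ) f) := by
  simp only [pol_apply, map_sum, pderiv_mul, Finset.sum_add_distrib, pderiv_comm (k, γ)]
  congr 1
  rw [Finset.sum_eq_single k]
  · by_cases h : γ = α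
    · subst h; simp
    · rw [pderiv_X_of_ne (by simpa using Ne.symm h), zero_mul, if_neg h]
  · intro j _ hj
    rw [pderiv_X_of_ne (by simp [hj]), zero_mul]
  · simp

lemma pol_pderiv (α β γ : Fin 3) (k : ι) (f : MvPolynomial (ι × Fin 3) ℂ) :
    pol α β (pderiv (k, γ) f) =
      pderiv (k, γ) (pol α β f) - if γ = α then pderiv (k, β) f else 0 := by
  rw [pderiv_pol]; ring

/-- Invariance under `so₃`, spanned by the derivations `E_{αβ} - E_{βα}`. -/
def IsInv (f : MvPolynomial (ι × Fin 3) ℂ) : Prop := ∀ α β, pol α β f = pol β α f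

lemma isInv_iff (f : MvPolynomial (ι × Fin 3) ℂ) :
    IsInv f ↔ pol 0 1 f = pol 1 0 f ∧ pol 0 2 f = pol 2 0 f ∧ pol 1 2 f = pol 2 1 f := by
  refine ⟨fun h => ⟨h _ _, h _ _, h _ _⟩, fun ⟨h1, h2, h3⟩ α β => ?_⟩
  have h012 : ∀ γ : Fin 3, γ = 0 ∨ γ = 1 ∨ γ = 2 := by decide
  obtain rfl | rfl | rfl := h012 α <;> obtain rfl | rfl | rfl := h012 β <;> simp only [h1, h2, h3]

lemma IsInv.lap {f : MvPolynomial (ι × Fin 3) ℂ} (h : IsInv f) (i j : ι) : IsInv (lap i j f) := by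
  obtain ⟨h1, h2, h3⟩ := (isInv_iff f).1 h
  refine (isInv_iff _).2 ⟨?_, ?_, ?_⟩ <;>
  · simp [_root_.lap, Fin.sum_univ_three, pol_pderiv, h1, h2, h3]
    try ring

lemma IsInv.cayley {f : MvPolynomial (ι × Fin 3) ℂ} (h : IsInv f) (k l m : ι) :
    IsInv (cayley k l m f) := by
  obtain ⟨h1, h2, h3⟩ := (isInv_iff f).1 h
  refine (isInv_iff _).2 ⟨?_, ?_, ?_⟩ <;>
  · simp [_root_.cayley, pol_pderiv, h1, h2, h3]
    try ring

lemma isInv_dotP (i j : ι) : IsInv (dotP i j) := by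
  refine (isInv_iff _).2 ⟨?_, ?_, ?_⟩ <;>
  · simp [dotP, Fin.sum_univ_three, pol_X]
    try ring

lemma isInv_detP (k l m : ι) : IsInv (detP k l m) := by
  refine (isInv_iff _).2 ⟨?_, ?_, ?_⟩ <;>
  · simp [detP, pol_X]
    try ring

lemma isInv_of_mem {f : MvPolynomial (ι × Fin 3) ℂ} (hf : f ∈ genAlg ι) : IsInv f := by
  induction hf using Algebra.adjoin_induction with
  | mem x hx =>
    rcases hx with ⟨i, j, rfl⟩ | ⟨k, l, m, rfl⟩
    · exact isInv_dotP i j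
    · exact isInv_detP k l m
  | algebraMap r => intro α β; simp
  | add x y _ _ hx hy => intro α β; rw [map_add, map_add, hx α β, hy α β]
  | mul x y _ _ hx hy => intro α β; rw [Derivation.leibniz, Derivation.leibniz, hx α β, hy α β]

lemma fischer_pol_pol (α β : Fin 3) (b : MvPolynomial (ι × Fin 3) ℂ) :
    fischer (pol β α b) (pol α β b) =
      (if α = β then ∑ i, fischer (pderiv (i, α) b) (pderiv (i, α) b) else 0) +
      ∑ i, ∑ j, fischer (pderiv (i, α) (pderiv (j, α) b)) (pderiv (i, β) (pderiv (j, β) b)) := by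
  conv_lhs => rw [pol_apply β α, fischer_sum_left]
  simp only [fischer_X_mul, pderiv_pol, fischer_add_right, Finset.sum_add_distrib]
  congr 1
  · by_cases h : α = β
    · subst h; simp
    · simp [h, Ne.symm h, fischer_zero_right]
  · refine Finset.sum_congr rfl fun i _ => ?_
    rw [pol_apply, fischer_sum_right]
    refine Finset.sum_congr rfl fun j _ => ?_
    rw [fischer_mul_X, pderiv_comm (j, α), pderiv_comm (j, β)]

/-- For an invariant `b`, the squared norms of the `E_{αβ} b` (`α ≠ β`) and of the
`∂_i^α ∂_j^α b` add up to those of the `lap i j b`. Hence harmonicity kills all of them. -/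
lemma harmonic_aux {b : MvPolynomial (ι × Fin 3) ℂ} (hb : IsInv b) (hlap : ∀ i j, lap i j b = 0) :
    (∀ α β, α ≠ β → pol α β b = 0) ∧
      ∀ i j α, pderiv (i, α) (pderiv (j, α) b) = 0 := by
  let S : Fin 3 → Fin 3 → ℝ := fun α β => ∑ i, ∑ j,
    (fischer (pderiv (i, α) (pderiv (j, α) b)) (pderiv (i, β) (pderiv (j, β) b))).re
  have hne : ∀ α β, α ≠ β → S α β = (fischer (pol α β b) (pol α β b)).re := by
    intro α β h
    have := congrArg Complex.re (fischer_pol_pol α β b)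
    rw [hb β α, if_neg h, zero_add] at this
    rw [this]
    simp [S]
  have hnonneg : ∀ α β, 0 ≤ S α β := by
    intro α β
    by_cases h : α = β
    · subst h
      exact Finset.sum_nonneg fun i _ => Finset.sum_nonneg fun j _ => fischer_self_re_nonneg _
    · rw [hne α β h]
      exact fischer_self_re_nonneg _
  have hsum : ∑ α, ∑ β, S α β = 0 := by
    have h0 : ∑ i, ∑ j, (fischer (lap i j b) (lap i j b)).re = 0 := by
      simp [hlap, fischer_zero_right]
    rw [← h0]
    simp only [S, lap, Fin.sum_univ_three, fischer_add_left, fischer_add_right,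
      Finset.sum_add_distrib, Complex.add_re]
  have hS : ∀ α β, S α β = 0 := by
    intro α β
    have h1 := (Finset.sum_eq_zero_iff_of_nonneg
      fun α _ => Finset.sum_nonneg fun β _ => hnonneg α β).1 hsum α (Finset.mem_univ _)
    exact (Finset.sum_eq_zero_iff_of_nonneg fun β _ => hnonneg α β).1 h1 β (Finset.mem_univ _)
  refine ⟨fun α β h => eq_zero_of_fischer_self_re (by rw [← hne α β h, hS]), fun i j α => ?_⟩
  have h1 := (Finset.sum_eq_zero_iff_of_nonneg fun i _ => Finset.sum_nonneg
    fun j _ => fischer_self_re_nonneg _).1 (hS α α) i (Finset.mem_univ _)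
  exact eq_zero_of_fischer_self_re ((Finset.sum_eq_zero_iff_of_nonneg
    fun j _ => fischer_self_re_nonneg _).1 h1 j (Finset.mem_univ _))

/-- An invariant orthogonal to `1` and killed by all contraction operators vanishes. -/
lemma eq_zero_of_harmonic {b : MvPolynomial (ι × Fin 3) ℂ} (hb : IsInv b)
    (hlap : ∀ i j, lap i j b = 0) (hcay : ∀ k l m, cayley k l m b = 0)
    (h1 : fischer 1 b = 0) : b = 0 := by
  obtain ⟨hE, hD⟩ := harmonic_aux hb hlap
  have hd1 : ∀ α β, α ≠ β → ∀ k, pderiv (k, β) b = -pol α β (pderiv (k, α) b) := by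
    intro α β h k
    have := pderiv_pol α β α k b
    rw [hE α β h, map_zero, if_pos rfl] at this
    exact eq_neg_of_add_eq_zero_left this.symm
  -- The second derivatives are skew-symmetric in the upper indices.
  have hskew : ∀ α β, α ≠ β → ∀ l k,
      pderiv (l, α) (pderiv (k, β) b) = -pderiv (l, β) (pderiv (k, α) b) := by
    intro α β h l k
    rw [hd1 α β h k, map_neg, pderiv_pol, if_pos rfl, hD, map_zero, add_zero]
  -- Hence `cayley k l m b` consists of six equal terms.
  have htriple : ∀ k l m, pderiv (k, 0) (pderiv (l, 1) (pderiv (m, 2) b)) = 0 := by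
    intro k l m
    have e1 : pderiv (k, 0) (pderiv (l, 2) (pderiv (m, 1) b)) =
        -pderiv (k, 0) (pderiv (l, 1) (pderiv (m, 2) b)) := by
      rw [hskew 2 1 (by decide), map_neg]
    have hswap : ∀ α β γ, α ≠ β → pderiv (k, α) (pderiv (l, β) (pderiv (m, γ) b)) =
        -pderiv (k, β) (pderiv (l, α) (pderiv (m, γ) b)) := by
      intro α β γ h
      rw [pderiv_comm (l, β) (m, γ), pderiv_comm (k, α) (m, γ), hskew α β h, map_neg,
        pderiv_comm (l, α) (m, γ), pderiv_comm (k, β) (m, γ)]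
    have e2 := hswap 1 0 2 (by decide)
    have e3 : pderiv (k, 1) (pderiv (l, 2) (pderiv (m, 0) b)) =
        -pderiv (k, 1) (pderiv (l, 0) (pderiv (m, 2) b)) := by
      rw [hskew 2 0 (by decide), map_neg]
    have e4 := hswap 2 0 1 (by decide)
    have e5 := hswap 2 1 0 (by decide)
    have h := hcay k l m
    rw [cayley, e5, e3, e4, e2, e1] at h
    have h6 : (6 : MvPolynomial (ι × Fin 3) ℂ) *
        pderiv (k, 0) (pderiv (l, 1) (pderiv (m, 2) b)) = 0 := by
      rw [← h]; ring
    exact (mul_eq_zero.1 h6).resolve_left (by norm_num)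
  have hdouble : ∀ k m, pderiv (k, 1) (pderiv (m, 2) b) = 0 := by
    intro k m
    rw [pderiv_comm, hd1 0 1 (by decide) k, map_neg, pderiv_pol, if_neg (by decide), zero_add,
      pol_apply, neg_eq_zero]
    refine Finset.sum_eq_zero fun i _ => ?_
    rw [pderiv_comm (m, 2), pderiv_comm (i, 1), htriple, mul_zero]
  have h2 : ∀ m, pderiv (m, 2) b = 0 := by
    intro m
    rw [hd1 1 2 (by decide) m, pol_apply, neg_eq_zero]
    refine Finset.sum_eq_zero fun i _ => ?_
    rw [pderiv_comm (i, 2), hdouble, mul_zero]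
  refine eq_zero_of_pderiv_eq_zero h1 fun ⟨i, α⟩ => ?_
  by_cases h : α = 2
  · rw [h, h2]
  · rw [hd1 2 α (Ne.symm h), h2, map_zero, neg_zero]

/-- The first fundamental theorem for `so₃` acting on finitely many vectors. -/
theorem mem_genAlg_of_isInv (n : ℕ) : ∀ f : MvPolynomial (ι × Fin 3) ℂ, f.totalDegree ≤ n →
    IsInv f → f ∈ genAlg ι := by
  induction n using Nat.strong_induction_on with
  | _ n ih =>
  intro f hfn hf
  let K : Submodule ℂ (MvPolynomial (ι × Fin 3) ℂ) :=
    Subalgebra.toSubmodule (genAlg ι) ⊓ restrictTotalDegree (ι × Fin 3) ℂ n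
  have : FiniteDimensional ℂ (restrictTotalDegree (ι × Fin 3) ℂ n) := inferInstance
  have : FiniteDimensional ℂ K := Submodule.finiteDimensional_inf_right _ _
  obtain ⟨a, ⟨haA, han⟩, b, hbK, rfl⟩ := exists_fischer_decomp K f
  replace haA : a ∈ genAlg ι := haA
  replace han : a.totalDegree ≤ n := (mem_restrictTotalDegree _ _ _).1 han
  have hbn : b.totalDegree ≤ n := by
    have := totalDegree_sub (a + b) a
    rw [add_sub_cancel_left] at this
    exact this.trans (max_le hfn han)
  have hb : IsInv b := by
    intro α β
    have h := hf α β
    rw [map_add, map_add, isInv_of_mem haA α β] at h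
    exact add_left_cancel h
  have hK : ∀ u ∈ genAlg ι, u.totalDegree ≤ n → fischer u b = 0 := fun u h1 h2 =>
    hbK u ⟨h1, (mem_restrictTotalDegree _ _ _).2 h2⟩
  have hlap : ∀ i j, lap i j b = 0 := by
    intro i j
    match n, ih, hbn, hK with
    | 0, _, hbn, _ => simp [lap, pderiv_eq_zero_of_totalDegree hbn]
    | 1, _, hbn, _ => simp [lap, pderiv_eq_zero_of_totalDegree (totalDegree_pderiv_le hbn)]
    | n + 2, ih, hbn, hK =>
      have hdeg : (lap i j b).totalDegree ≤ n := totalDegree_finsetSum_le fun γ _ =>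
        totalDegree_pderiv_le (totalDegree_pderiv_le hbn)
      have hmem := ih n (by omega) _ hdeg (hb.lap i j)
      refine eq_zero_of_fischer_self_re ?_
      rw [← fischer_dotP_mul, hK _ (mul_mem (dotP_mem i j) hmem) (totalDegree_dotP_mul_le i j hdeg),
        Complex.zero_re]
  have hcay : ∀ k l m, cayley k l m b = 0 := by
    intro k l m
    match n, ih, hbn, hK with
    | 0, _, hbn, _ => simp [cayley, pderiv_eq_zero_of_totalDegree hbn]
    | 1, _, hbn, _ => simp [cayley, pderiv_eq_zero_of_totalDegree (totalDegree_pderiv_le hbn)]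
    | 2, _, hbn, _ =>
      simp [cayley, pderiv_eq_zero_of_totalDegree (totalDegree_pderiv_le
        (totalDegree_pderiv_le hbn))]
    | n + 3, ih, hbn, hK =>
      have h3 : ∀ s t u : ι × Fin 3, pderiv s (pderiv t (pderiv u b)) ∈
          restrictTotalDegree (ι × Fin 3) ℂ n := fun s t u =>
        (mem_restrictTotalDegree _ _ _).2
          (totalDegree_pderiv_le (totalDegree_pderiv_le (totalDegree_pderiv_le hbn)))
      have hdeg : (cayley k l m b).totalDegree ≤ n := (mem_restrictTotalDegree _ _ _).1
        (sub_mem (add_mem (add_mem (sub_mem (sub_mem (h3 _ _ _) (h3 _ _ _)) (h3 _ _ _))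
          (h3 _ _ _)) (h3 _ _ _)) (h3 _ _ _))
      have hmem := ih n (by omega) _ hdeg (hb.cayley k l m)
      refine eq_zero_of_fischer_self_re ?_
      rw [← fischer_detP_mul,
        hK _ (mul_mem (detP_mem k l m) hmem) (totalDegree_detP_mul_le k l m hdeg), Complex.zero_re]
  rw [eq_zero_of_harmonic hb hlap hcay (hK 1 (one_mem _) (by simp)), add_zero]
  exact haA

end Orthogonal

/-! ### Passage from the basis `h, x, y` to an orthonormal basis -/

/-- The coordinate change from the basis `h, x, y` to an orthonormal one, killing the copies with
index `≥ N`: `h ↦ e⁰`, `x ↦ (e¹ + i e²) / 2`, `y ↦ (e¹ - i e²) / 2`. -/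
noncomputable def toOrtho (N : ℕ) :
    MvPolynomial (ℕ × Fin 3) ℂ →ₐ[ℂ] MvPolynomial (Fin N × Fin 3) ℂ :=
  aeval fun p => if h : p.1 < N then
    ![X (⟨p.1, h⟩, 0), C (1 / 2) * (X (⟨p.1, h⟩, 1) + C Complex.I * X (⟨p.1, h⟩, 2)),
      C (1 / 2) * (X (⟨p.1, h⟩, 1) - C Complex.I * X (⟨p.1, h⟩, 2))] p.2 else 0

/-- The inverse coordinate change: `e⁰ ↦ h`, `e¹ ↦ x + y`, `e² ↦ -i (x - y)`. -/
noncomputable def ofOrtho (N : ℕ) :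
    MvPolynomial (Fin N × Fin 3) ℂ →ₐ[ℂ] MvPolynomial (ℕ × Fin 3) ℂ :=
  aeval fun p => ![aH p.1, aX p.1 + aY p.1, -(C Complex.I * (aX p.1 - aY p.1))] p.2

lemma C_I_mul_C_I {σ : Type*} : (C Complex.I * C Complex.I : MvPolynomial σ ℂ) = -1 := by
  rw [← C_mul, Complex.I_mul_I, C_neg, C_1]

lemma two_mul_C_half {σ : Type*} : (2 * C (1 / 2) : MvPolynomial σ ℂ) = 1 := by
  rw [← map_ofNat (C : ℂ →+* MvPolynomial σ ℂ) 2, ← C_mul, ← C_1]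
  norm_num

section

variable {N : ℕ}

lemma toOrtho_X_of_ge {n : ℕ} (h : ¬ n < N) (γ : Fin 3) : toOrtho N (X (n, γ)) = 0 := by
  simp [toOrtho, h]

lemma toOrtho_aH {n : ℕ} (h : n < N) : toOrtho N (aH n) = X (⟨n, h⟩, 0) := by
  simp [toOrtho, h]

lemma toOrtho_aX {n : ℕ} (h : n < N) : toOrtho N (aX n) =
    C (1 / 2) * (X (⟨n, h⟩, 1) + C Complex.I * X (⟨n, h⟩, 2)) := by
  simp [toOrtho, h]

lemma toOrtho_aY {n : ℕ} (h : n < N) : toOrtho N (aY n) =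
    C (1 / 2) * (X (⟨n, h⟩, 1) - C Complex.I * X (⟨n, h⟩, 2)) := by
  simp [toOrtho, h]

lemma ofOrtho_X0 (i : Fin N) : ofOrtho N (X (i, 0)) = aH i := by simp [ofOrtho]

lemma ofOrtho_X1 (i : Fin N) : ofOrtho N (X (i, 1)) = aX i + aY i := by simp [ofOrtho]

lemma ofOrtho_X2 (i : Fin N) : ofOrtho N (X (i, 2)) = -(C Complex.I * (aX i - aY i)) := by
  simp [ofOrtho]

lemma forall_fin_three_of {P : Fin 3 → Prop} (h0 : P 0) (h1 : P 1) (h2 : P 2) : ∀ γ, P γ := by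
  intro γ
  fin_cases γ
  exacts [h0, h1, h2]

lemma ofOrtho_toOrtho {f : MvPolynomial (ℕ × Fin 3) ℂ} (hf : ∀ p ∈ f.vars, p.1 < N) :
    ofOrtho N (toOrtho N f) = f := by
  have h : ((ofOrtho N).comp (toOrtho N) : MvPolynomial (ℕ × Fin 3) ℂ →+* _) f =
      RingHom.id _ f := by
    refine hom_congr_vars ?_ ?_ rfl
    · ext c; simp
    · rintro ⟨n, γ⟩ hp -
      have hn : n < N := hf _ hp
      have hC : ∀ c, ofOrtho N (C c) = C c := fun c => (ofOrtho N).commutes c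
      have hI := C_I_mul_C_I (σ := ℕ × Fin 3)
      have h2 := two_mul_C_half (σ := ℕ × Fin 3)
      change ofOrtho N (toOrtho N (X (n, γ))) = X (n, γ)
      revert γ
      refine forall_fin_three_of ?_ ?_ ?_
      · intro _
        rw [toOrtho_aH hn, ofOrtho_X0]
      · intro _
        rw [toOrtho_aX hn, map_mul, map_add, map_mul, ofOrtho_X1, ofOrtho_X2, hC, hC]
        linear_combination (aX n) * h2 - C (1 / 2) * (aX n - aY n) * hI
      · intro _
        rw [toOrtho_aY hn, map_mul, map_sub, map_mul, ofOrtho_X1, ofOrtho_X2, hC, hC]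
        linear_combination (aY n) * h2 + C (1 / 2) * (aX n - aY n) * hI
  exact h

/-- Two derivations intertwined by an algebra homomorphism on the variables are intertwined. -/
lemma map_derivation {σ τ : Type*} (φ : MvPolynomial σ ℂ →ₐ[ℂ] MvPolynomial τ ℂ)
    (D : Derivation ℂ (MvPolynomial σ ℂ) (MvPolynomial σ ℂ))
    (D' : Derivation ℂ (MvPolynomial τ ℂ) (MvPolynomial τ ℂ))
    (h : ∀ s, φ (D (X s)) = D' (φ (X s))) (f : MvPolynomial σ ℂ) : φ (D f) = D' (φ f) := by
  induction f using MvPolynomial.induction_on with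
  | C c =>
    have hC : φ (C c) = C c := φ.commutes c
    rw [hC, derivation_C, derivation_C, map_zero]
  | add p q hp hq => simp only [map_add, hp, hq]
  | mul_X p s hp =>
    simp only [Derivation.leibniz, map_add, map_mul, smul_eq_mul, hp, h]

lemma ofOrtho_dotP (i j : Fin N) : ofOrtho N (dotP i j) = qsl i j := by
  simp only [dotP, Fin.sum_univ_three, map_add, map_mul, ofOrtho_X0, ofOrtho_X1, ofOrtho_X2, qsl]
  linear_combination (aX (i : ℕ) - aY i) * (aX j - aY j) * C_I_mul_C_I (σ := ℕ × Fin 3)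

lemma ofOrtho_detP (k l m : Fin N) :
    ofOrtho N (detP k l m) = C (2 * Complex.I) * csl k l m := by
  have h2 : (C (2 * Complex.I) : MvPolynomial (ℕ × Fin 3) ℂ) = 2 * C Complex.I := by
    rw [C_mul, map_ofNat]
  simp only [detP, map_add, map_sub, map_mul, ofOrtho_X0, ofOrtho_X1, ofOrtho_X2, csl,
    Matrix.det_fin_three, h2]
  simp
  ring

lemma isInv_toOrtho
    {Dh Dx Dy : Derivation ℂ (MvPolynomial (ℕ × Fin 3) ℂ) (MvPolynomial (ℕ × Fin 3) ℂ)}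
    (hDh : ∀ n : ℕ, Dh (aH n) = 0 ∧ Dh (aX n) = 2 * aX n ∧ Dh (aY n) = -(2 * aY n))
    (hDx : ∀ n : ℕ, Dx (aH n) = -(2 * aX n) ∧ Dx (aX n) = 0 ∧ Dx (aY n) = aH n)
    (hDy : ∀ n : ℕ, Dy (aH n) = 2 * aY n ∧ Dy (aX n) = -(aH n) ∧ Dy (aY n) = 0)
    {f : MvPolynomial (ℕ × Fin 3) ℂ} (hf : Dh f = 0 ∧ Dx f = 0 ∧ Dy f = 0) :
    IsInv (toOrtho N f) := by
  have hI := C_I_mul_C_I (σ := Fin N × Fin 3)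
  have h2 := two_mul_C_half (σ := Fin N × Fin 3)
  have hh := map_derivation (toOrtho N) Dh ((-2 * Complex.I) • (pol 1 2 - pol 2 1)) ?_ f
  have hx := map_derivation (toOrtho N) Dx
    ((pol 0 1 - pol 1 0) + Complex.I • (pol 0 2 - pol 2 0)) ?_ f
  have hy := map_derivation (toOrtho N) Dy
    (-(pol 0 1 - pol 1 0) + Complex.I • (pol 0 2 - pol 2 0)) ?_ f
  · simp only [hf, map_zero, Derivation.add_apply, Derivation.neg_apply, Derivation.smul_apply,
      Derivation.sub_apply, smul_eq_C_mul, C_mul, C_neg, map_ofNat] at hh hx hy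
    refine (isInv_iff _).2 ⟨?_, ?_, ?_⟩
    · linear_combination (-C (1 / 2)) * (hx - hy) -
        (pol 0 1 (toOrtho N f) - pol 1 0 (toOrtho N f)) * h2
    · linear_combination (C (1 / 2) * C Complex.I) * (hx + hy) +
        (pol 0 2 (toOrtho N f) - pol 2 0 (toOrtho N f)) * (2 * C (1 / 2) * hI - h2)
    · linear_combination (-C (1 / 2) * C Complex.I) * hh +
        (pol 1 2 (toOrtho N f) - pol 2 1 (toOrtho N f)) * (2 * C (1 / 2) * hI - h2)
  all_goals
    rintro ⟨n, γ⟩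
    by_cases hn : n < N
    swap
    · revert γ
      refine forall_fin_three_of ?_ ?_ ?_ <;>
      simp [toOrtho_X_of_ge hn, hDh, hDx, hDy]
    have hC : (C (-2) : MvPolynomial (Fin N × Fin 3) ℂ) = -2 := by rw [C_neg, map_ofNat]
    revert γ
    refine forall_fin_three_of ?_ ?_ ?_ <;>
    simp only [toOrtho_aH hn, toOrtho_aX hn, toOrtho_aY hn, hDh, hDx, hDy, pol_X, map_zero,
      map_neg, map_mul, map_add, map_sub, map_ofNat, Derivation.add_apply, Derivation.neg_apply,
      Derivation.smul_apply, Derivation.sub_apply, smul_eq_C_mul, Derivation.leibniz, smul_eq_mul,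
      derivation_C, Fin.isValue, Fin.reduceEq, if_true, if_false, hC]
  -- The nine variable images, for `D_y`, `D_x`, `D_h` in turn.
  · linear_combination (X (⟨_, hn⟩, 1) - C Complex.I * X (⟨_, hn⟩, 2)) * h2
  · linear_combination X (⟨_, hn⟩, 0) * (h2 - C (1 / 2) * hI)
  · linear_combination X (⟨_, hn⟩, 0) * C (1 / 2) * hI
  · linear_combination -(X (⟨_, hn⟩, 1) + C Complex.I * X (⟨_, hn⟩, 2)) * h2
  · linear_combination -X (⟨_, hn⟩, 0) * C (1 / 2) * hI
  · linear_combination X (⟨_, hn⟩, 0) * (C (1 / 2) * hI - h2)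
  · ring
  · linear_combination 2 * C (1 / 2) * X (⟨_, hn⟩, 1) * hI
  · linear_combination -2 * C (1 / 2) * X (⟨_, hn⟩, 1) * hI

end

/-- A derivation of the polynomial ring vanishing on a set vanishes on the algebra it generates. -/
lemma derivation_eq_zero_of_mem_adjoin {σ : Type*}
    {D : Derivation ℂ (MvPolynomial σ ℂ) (MvPolynomial σ ℂ)} {S : Set (MvPolynomial σ ℂ)}
    (hS : ∀ p ∈ S, D p = 0) {f : MvPolynomial σ ℂ} (hf : f ∈ Algebra.adjoin ℂ S) : D f = 0 := by
  induction hf using Algebra.adjoin_induction with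
  | mem x hx => exact hS x hx
  | algebraMap r => exact D.map_algebraMap r
  | add x y _ _ hx hy => rw [map_add, hx, hy, add_zero]
  | mul x y _ _ hx hy => rw [Derivation.leibniz, hx, hy, smul_zero, smul_zero, add_zero]

lemma csl_eq (k l m : ℕ) : csl k l m =
    aH k * aX l * aY m - aH k * aY l * aX m - aX k * aH l * aY m + aX k * aY l * aH m
      + aY k * aH l * aX m - aY k * aX l * aH m := by
  simp [csl, Matrix.det_fin_three]

/-- The cubic invariants with arbitrary indices lie in any subalgebra containing those with
increasing indices, since the determinant is alternating. -/
lemma csl_mem {A : Subalgebra ℂ (MvPolynomial (ℕ × Fin 3) ℂ)}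
    (hA : ∀ k l m, k < l → l < m → csl k l m ∈ A) (k l m : ℕ) : csl k l m ∈ A := by
  have s12 : ∀ k l m, csl l k m = -csl k l m := fun k l m => by
    rw [csl_eq, csl_eq]; ring
  have s23 : ∀ k l m, csl k m l = -csl k l m := fun k l m => by
    rw [csl_eq, csl_eq]; ring
  have z12 : ∀ k m, csl k k m = 0 := fun k m => by rw [csl_eq]; ring
  have z23 : ∀ k m, csl k m m = 0 := fun k m => by rw [csl_eq]; ring
  have z13 : ∀ k m, csl k m k = 0 := fun k m => by rw [csl_eq]; ring
  rcases lt_trichotomy k l with h1 | rfl | h1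
  · rcases lt_trichotomy l m with h2 | rfl | h2
    · exact hA _ _ _ h1 h2
    · rw [z23]; exact zero_mem A
    · rcases lt_trichotomy k m with h3 | rfl | h3
      · rw [s23]; exact neg_mem (hA _ _ _ h3 h2)
      · rw [z13]; exact zero_mem A
      · rw [s23, s12, neg_neg]; exact hA _ _ _ h3 h1
  · rw [z12]; exact zero_mem A
  · rcases lt_trichotomy k m with h2 | rfl | h2
    · rw [s12]; exact neg_mem (hA _ _ _ h1 h2)
    · rw [z13]; exact zero_mem A
    · rcases lt_trichotomy l m with h3 | rfl | h3
      · rw [s12, s23, neg_neg]; exact hA _ _ _ h3 h2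
      · rw [z23]; exact zero_mem A
      · rw [s12, s23, s12, neg_neg]; exact neg_mem (hA _ _ _ h3 h1)

/-- Weyl's description of the polynomial invariants of countably many copies of
the adjoint representation of `sl₂`: the common kernel of the derivations
`D_h, D_x, D_y` (induced by the adjoint action of `h, x, y`) is the `ℂ`-algebra
generated by the quadratics `q_{ij}` (i ≤ j) and the cubics `c_{klm}` (k < l < m). -/
theorem sl2_adjoint_invariants
    (Dh Dx Dy : Derivation ℂ (MvPolynomial (ℕ × Fin 3) ℂ) (MvPolynomial (ℕ × Fin 3) ℂ))
    (hDh : ∀ n : ℕ, Dh (aH n) = 0 ∧ Dh (aX n) = 2 * aX n ∧ Dh (aY n) = -(2 * aY n))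
    (hDx : ∀ n : ℕ, Dx (aH n) = -(2 * aX n) ∧ Dx (aX n) = 0 ∧ Dx (aY n) = aH n)
    (hDy : ∀ n : ℕ, Dy (aH n) = 2 * aY n ∧ Dy (aX n) = -(aH n) ∧ Dy (aY n) = 0)
    (f : MvPolynomial (ℕ × Fin 3) ℂ) :
    (Dh f = 0 ∧ Dx f = 0 ∧ Dy f = 0) ↔
      f ∈ Algebra.adjoin ℂ
        ({ p : MvPolynomial (ℕ × Fin 3) ℂ | ∃ i j : ℕ, i ≤ j ∧ p = qsl i j } ∪
         { p : MvPolynomial (ℕ × Fin 3) ℂ | ∃ k l m : ℕ, k < l ∧ l < m ∧ p = csl k l m }) := by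
  constructor
  · intro hf
    -- Only finitely many copies occur in `f`.
    let N := f.vars.sup (fun p => p.1) + 1
    have hN : ∀ p ∈ f.vars, p.1 < N := fun p hp =>
      Nat.lt_succ_of_le (Finset.le_sup (f := fun p : ℕ × Fin 3 => p.1) hp)
    have hmem := mem_genAlg_of_isInv _ _ le_rfl (isInv_toOrtho (N := N) hDh hDx hDy hf)
    rw [← ofOrtho_toOrtho hN]
    set A := Algebra.adjoin ℂ
        ({ p : MvPolynomial (ℕ × Fin 3) ℂ | ∃ i j : ℕ, i ≤ j ∧ p = qsl i j } ∪
         { p : MvPolynomial (ℕ × Fin 3) ℂ | ∃ k l m : ℕ, k < l ∧ l < m ∧ p = csl k l m })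
    have hle : genAlg (Fin N) ≤ A.comap (ofOrtho N) := by
      refine Algebra.adjoin_le ?_
      rintro p (⟨i, j, rfl⟩ | ⟨k, l, m, rfl⟩)
      · change ofOrtho N (dotP i j) ∈ A
        rw [ofOrtho_dotP]
        rcases le_total (i : ℕ) j with h | h
        · exact Algebra.subset_adjoin (Or.inl ⟨i, j, h, rfl⟩)
        · exact Algebra.subset_adjoin (Or.inl ⟨j, i, h, by rw [qsl, qsl]; ring⟩)
      · change ofOrtho N (detP k l m) ∈ A
        rw [ofOrtho_detP, ← smul_eq_C_mul]
        exact A.smul_mem (csl_mem (fun k l m h1 h2 =>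
          Algebra.subset_adjoin (Or.inr ⟨k, l, m, h1, h2, rfl⟩)) _ _ _) _
    exact hle hmem
  · intro hf
    refine ⟨derivation_eq_zero_of_mem_adjoin ?_ hf, derivation_eq_zero_of_mem_adjoin ?_ hf,
      derivation_eq_zero_of_mem_adjoin ?_ hf⟩ <;>
    · rintro p (⟨i, j, -, rfl⟩ | ⟨k, l, m, -, -, rfl⟩)
      · rw [qsl, mul_assoc, mul_assoc, ← map_ofNat C 2]
        simp only [map_add, Derivation.leibniz, smul_eq_mul, derivation_C, hDh, hDx, hDy]
        simp only [map_ofNat]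
        ring
      · rw [csl_eq]
        simp only [map_add, map_sub, Derivation.leibniz, smul_eq_mul, hDh, hDx, hDy]
        ring
end
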